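/- arXiv:1502.01840 — 2 statements merged into one kernel-verified Lean document; each statement's English description precedes it below -/
import Mathlib

section
/- (Representation of the time optimal control.) Under the observability and unique continuation assumptions, let M > 0, let τ*(M) be the optimal time for (TP)^M, and let η̂ be the minimizer of J^{τ*(M)}. Then the unique time optimal control is u*(t) = M · B*T*_{τ*(M)-t}η̂ / ||B*T*_{τ*(M)-t}η̂||_U for a.e. t ∈ (0,τ*(M)), and moreover η̂ ≠ 0. -/
open MeasureTheory Filter
open scoped RealInnerProductSpace

/-- The state trajectory `z(t;ψ,u) = T_t ψ + ∫_0^t T_{t-σ} B u(σ) dσ`. -/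
noncomputable def traj {X U : Type*} [NormedAddCommGroup X] [NormedSpace ℝ X] [CompleteSpace X]
    [NormedAddCommGroup U] [NormedSpace ℝ U]
    (T : ℝ → X →L[ℝ] X) (B : U →L[ℝ] X) (ψ : X) (u : ℝ → U) (t : ℝ) : X :=
  T t ψ + ∫ σ in Set.Ioc 0 t, T (t - σ) (B (u σ))

/-- `u` belongs to the closed ball of radius `M` in `L^∞((0,∞);U)`. -/
def admissible {U : Type*} [NormedAddCommGroup U] (M : ℝ) (u : ℝ → U) : Prop :=
  AEStronglyMeasurable u (volume.restrict (Set.Ioi 0)) ∧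
    ∀ᵐ t ∂volume.restrict (Set.Ioi 0), ‖u t‖ ≤ M

/-- The functional `J^τ(η) = ½(∫_0^τ ‖B*T*_{τ-t}η‖ dt)² + ⟨ψ, T*_τ η⟩ + r‖η‖`. -/
noncomputable def Jfun {X U : Type*} [NormedAddCommGroup X] [InnerProductSpace ℝ X]
    [CompleteSpace X] [NormedAddCommGroup U] [InnerProductSpace ℝ U] [CompleteSpace U]
    (T : ℝ → X →L[ℝ] X) (B : U →L[ℝ] X) (r : ℝ) (ψ : X) (τ : ℝ) (η : X) : ℝ :=
  (1 / 2) * (∫ t in Set.Ioc 0 τ, ‖B.adjoint ((T (τ - t)).adjoint η)‖) ^ 2 +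
    ⟪ψ, (T τ).adjoint η⟫ + r * ‖η‖

/-!
Write `S(t) = T_{τ-t} B` and `G(η) = ∫ ‖S(t)* η‖`, the support function of the states reached from
the origin by controls bounded by `1`, and put `p(η) = ⟪η, T_τ ψ⟫ + r ‖η‖`. Both functions are
positively homogeneous, so a minimizer `η̂` of `½ G² + p` satisfies `p(η̂) = -G(η̂)²`, and
minimizing along rays gives `-p(η) ≤ G(η̂) G(η)` for every `η`.

If a control `u` bounded by `M` steers `ψ` into the closed target ball at time `τ`, then
`G(η̂)² = -p(η̂) ≤ ∫ ⟪u, S* η̂⟫ ≤ M G(η̂)`, so `G(η̂) ≤ M`. If `τ` is optimal, no such control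
reaches the open ball at time `τ`: dropping an initial piece of the control and moving the rest to
time `0` would reach the open ball a little earlier. Separating the ball from the reachable states
then gives `η ≠ 0` with `M G(η) ≤ -p(η) ≤ G(η̂) G(η)`, and `G(η) > 0` by unique continuation.
Hence `G(η̂) = M`, and every time optimal control attains equality in
`⟪u, S* η̂⟫ ≤ M ‖S* η̂‖` almost everywhere, which determines it.
-/

open Topology

section StrongMeasurability

variable {𝕜 E F α : Type*} [RCLike 𝕜] [NormedAddCommGroup E] [InnerProductSpace 𝕜 E]
  [NormedAddCommGroup F] [InnerProductSpace 𝕜 F]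

/- Pettis' theorem in Hilbert space: `f` is the limit of its orthogonal projections onto the
finite-dimensional subspaces spanned by finite parts of a countable set whose closure contains the
range. -/
theorem stronglyMeasurable_of_inner_of_isSeparable_range [MeasurableSpace α] [CompleteSpace E]
    {f : α → E} (hf : ∀ y, StronglyMeasurable fun a => inner 𝕜 y (f a))
    (hsep : TopologicalSpace.IsSeparable (Set.range f)) : StronglyMeasurable f := by
  obtain ⟨c, hc, hfc⟩ := hsep
  have := hc.to_subtype
  let V (s : Finset c) : Submodule 𝕜 E := Submodule.span 𝕜 ((↑) '' (s : Set c))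
  have hVfin (s : Finset c) : FiniteDimensional 𝕜 (V s) :=
    FiniteDimensional.span_of_finite 𝕜 (s.finite_toSet.image _)
  have hVmono : Monotone V := fun s t hst => Submodule.span_mono (Set.image_mono hst)
  have hcV : c ⊆ (⨆ s, V s : Submodule 𝕜 E) := fun x hx =>
    Submodule.mem_iSup_of_mem {⟨x, hx⟩} (Submodule.subset_span ⟨⟨x, hx⟩, by simp, rfl⟩)
  have hmem (a : α) : f a ∈ (⨆ s, V s).topologicalClosure :=
    closure_mono hcV (hfc (Set.mem_range_self a))
  have hproj (s : Finset c) : StronglyMeasurable fun a => (V s).starProjection (f a) := by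
    simp only [(stdOrthonormalBasis 𝕜 (V s)).starProjection_eq_sum_rankOne,
      sum_apply, InnerProductSpace.rankOne_apply]
    exact Finset.stronglyMeasurable_fun_sum _ fun i _ => (hf _).smul_const _
  refine stronglyMeasurable_of_tendsto atTop hproj (tendsto_pi_nhds.2 fun a => ?_)
  simpa only [Submodule.starProjection_eq_self_iff.2 (hmem a)] using
    Submodule.starProjection_tendsto_closure_iSup V hVmono (f a)

variable [TopologicalSpace α]

theorem isSeparable_range_of_continuous_inner [TopologicalSpace.SeparableSpace α]
    [CompleteSpace E] {f : α → E} (hf : ∀ y, Continuous fun a => inner 𝕜 y (f a)) :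
    TopologicalSpace.IsSeparable (Set.range f) := by
  obtain ⟨d, hd, hdense⟩ := TopologicalSpace.exists_countable_dense α
  let V : Submodule 𝕜 E := (Submodule.span 𝕜 (f '' d)).topologicalClosure
  have hVsep : TopologicalSpace.IsSeparable (V : Set E) :=
    ((hd.image f).isSeparable.span (R := 𝕜)).closure
  refine hVsep.mono (Set.range_subset_iff.2 fun a => ?_)
  rw [SetLike.mem_coe, ← Submodule.orthogonal_orthogonal V, Submodule.mem_orthogonal]
  intro y hy
  refine congrFun (Continuous.ext_on hdense (hf y) continuous_const fun b hb => ?_) a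
  exact Submodule.inner_left_of_mem_orthogonal
    (Submodule.le_topologicalClosure _ (Submodule.subset_span (Set.mem_image_of_mem f hb))) hy

theorem stronglyMeasurable_of_continuous_inner [TopologicalSpace.SeparableSpace α]
    [MeasurableSpace α] [OpensMeasurableSpace α] [CompleteSpace E] {f : α → E}
    (hf : ∀ y, Continuous fun a => inner 𝕜 y (f a)) : StronglyMeasurable f :=
  stronglyMeasurable_of_inner_of_isSeparable_range (fun y => (hf y).stronglyMeasurable)
    (isSeparable_range_of_continuous_inner hf)

theorem stronglyMeasurable_adjoint_apply [TopologicalSpace.SeparableSpace α] [MeasurableSpace α]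
    [OpensMeasurableSpace α] [CompleteSpace E] [CompleteSpace F] {S : α → E →L[𝕜] F}
    (hS : ∀ x, Continuous fun a => S a x) (y : F) :
    StronglyMeasurable fun a => (S a).adjoint y := by
  refine stronglyMeasurable_of_continuous_inner (𝕜 := 𝕜) fun x => ?_
  simp only [ContinuousLinearMap.adjoint_inner_right]
  exact (hS x).inner continuous_const

end StrongMeasurability

section StronglyContinuousFamily

variable {𝕜 E F α : Type*} [NontriviallyNormedField 𝕜] [NormedAddCommGroup E] [NormedSpace 𝕜 E]
  [NormedAddCommGroup F] [NormedSpace 𝕜 F] [TopologicalSpace α] {S : α → E →L[𝕜] F}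

theorem aestronglyMeasurable_clm_apply_of_continuous [TopologicalSpace.MetrizableSpace α]
    [SecondCountableTopology α] [MeasurableSpace α] [OpensMeasurableSpace α] {μ : Measure α}
    (hS : ∀ x, Continuous fun a => S a x) {v : α → E} (hv : AEStronglyMeasurable v μ) :
    AEStronglyMeasurable (fun a => S a (v a)) μ := by
  have huncurry : StronglyMeasurable (Function.uncurry fun a b => S a (hv.mk v b)) :=
    stronglyMeasurable_uncurry_of_continuous_of_stronglyMeasurable (fun b => hS _)
      fun a => (S a).continuous.comp_stronglyMeasurable hv.stronglyMeasurable_mk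
  refine ⟨fun a => S a (hv.mk v a),
    huncurry.comp_measurable (measurable_id.prodMk measurable_id), ?_⟩
  filter_upwards [hv.ae_eq_mk] with a ha
  rw [ha]

theorem exists_forall_opNorm_le_of_isCompact [CompleteSpace E] {s : Set α}
    (hs : IsCompact s) (hS : ∀ x, Continuous fun a => S a x) : ∃ C, ∀ a ∈ s, ‖S a‖ ≤ C := by
  obtain ⟨C, hC⟩ := banach_steinhaus (g := fun a : s => S a) fun x =>
    (hs.exists_bound_of_continuousOn (hS x).continuousOn).imp fun _ hC a => hC a a.2
  exact ⟨C, fun a ha => hC ⟨a, ha⟩⟩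

end StronglyContinuousFamily

section BoundedInputs

variable {U α : Type*} [NormedAddCommGroup U] [MeasurableSpace α] {μ : Measure α} {M : ℝ}
  {u : α → U}

/-- The closed ball of radius `M` in `L^∞(μ; U)`, as a set of functions rather than of classes
modulo almost everywhere equality; `admissible M` is the case of Lebesgue measure on `(0, ∞)`. -/
def boundedInputs (U : Type*) [NormedAddCommGroup U] (μ : Measure α) (M : ℝ) : Set (α → U) :=
  {u | AEStronglyMeasurable u μ ∧ ∀ᵐ t ∂μ, ‖u t‖ ≤ M}

theorem boundedInputs_subset_of_absolutelyContinuous {ν : Measure α} (h : ν ≪ μ) :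
    boundedInputs U μ M ⊆ boundedInputs U ν M :=
  fun _ hu => ⟨hu.1.mono_ac h, h.ae_le hu.2⟩

theorem comp_mem_boundedInputs {β : Type*} [MeasurableSpace β] {ν : Measure β} {φ : β → α}
    (hu : u ∈ boundedInputs U μ M) (hφ : Measure.QuasiMeasurePreserving φ ν μ) :
    u ∘ φ ∈ boundedInputs U ν M :=
  ⟨hu.1.comp_quasiMeasurePreserving hφ, hφ.ae hu.2⟩

theorem indicator_mem_boundedInputs (hM : 0 ≤ M) {s : Set α} (hs : MeasurableSet s)
    (hu : u ∈ boundedInputs U (μ.restrict s) M) : s.indicator u ∈ boundedInputs U μ M := by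
  refine ⟨(aestronglyMeasurable_indicator_iff hs).2 hu.1, ?_⟩
  filter_upwards [(ae_restrict_iff' hs).1 hu.2] with t ht
  by_cases hts : t ∈ s
  · simpa only [Set.indicator_of_mem hts] using ht hts
  · simpa only [Set.indicator_of_notMem hts, norm_zero] using hM

variable [NormedSpace ℝ U]

theorem convex_boundedInputs : Convex ℝ (boundedInputs U μ M) := by
  rintro u ⟨hu, huM⟩ v ⟨hv, hvM⟩ a b ha hb hab
  refine ⟨(hu.const_smul a).add (hv.const_smul b), ?_⟩
  filter_upwards [huM, hvM] with t hut hvt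
  rw [← mem_closedBall_zero_iff] at hut hvt ⊢
  exact convex_closedBall (0 : U) M hut hvt ha hb hab

theorem norm_normalize_le_one (x : U) : ‖NormedSpace.normalize x‖ ≤ 1 := by
  rw [NormedSpace.normalize, norm_smul, norm_inv, norm_norm]
  exact inv_mul_le_one

theorem smul_normalize_mem_boundedInputs (hM : 0 ≤ M) {f : α → U}
    (hf : AEStronglyMeasurable f μ) :
    (fun t => M • NormedSpace.normalize (f t)) ∈ boundedInputs U μ M := by
  refine ⟨(hf.norm.inv₀.smul hf).const_smul M, Eventually.of_forall fun t => ?_⟩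
  rw [norm_smul, Real.norm_of_nonneg hM]
  exact mul_le_of_le_one_right hM (norm_normalize_le_one _)

end BoundedInputs

section BangBang

variable {U α : Type*} [NormedAddCommGroup U] [InnerProductSpace ℝ U]

theorem inner_smul_normalize_self (c : ℝ) (x : U) : ⟪c • NormedSpace.normalize x, x⟫ = c * ‖x‖ := by
  rw [NormedSpace.normalize, real_inner_smul_left, real_inner_smul_left, real_inner_self_eq_norm_sq]
  rcases eq_or_ne x 0 with rfl | hx
  · simp
  · field_simp

theorem eq_smul_normalize_of_mul_norm_le_inner {M : ℝ} {u x : U} (hx : x ≠ 0) (hu : ‖u‖ ≤ M)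
    (h : M * ‖x‖ ≤ ⟪u, x⟫) : u = M • NormedSpace.normalize x := by
  have hxpos : 0 < ‖x‖ := norm_pos_iff.2 hx
  have hM : M = ‖u‖ :=
    le_antisymm (le_of_mul_le_mul_right (h.trans (real_inner_le_norm u x)) hxpos) hu
  have heq : ‖x‖ • u = ‖u‖ • x :=
    inner_eq_norm_mul_iff_real.1 (le_antisymm (real_inner_le_norm u x) (hM ▸ h))
  rw [NormedSpace.normalize, smul_comm, hM, ← heq, inv_smul_smul₀ hxpos.ne']

variable [MeasurableSpace α] {μ : Measure α} {M : ℝ} {u f : α → U}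

theorem ae_inner_le_of_mem_boundedInputs (hu : u ∈ boundedInputs U μ M) (f : α → U) :
    (fun t => ⟪u t, f t⟫) ≤ᵐ[μ] fun t => M * ‖f t‖ := by
  filter_upwards [hu.2] with t ht
  exact (real_inner_le_norm _ _).trans (by gcongr)

theorem integrable_inner_of_mem_boundedInputs (hu : u ∈ boundedInputs U μ M)
    (hf : Integrable f μ) : Integrable (fun t => ⟪u t, f t⟫) μ := by
  refine (hf.norm.const_mul M).mono' (hu.1.inner hf.1) ?_
  filter_upwards [hu.2] with t ht
  exact (norm_inner_le_norm _ _).trans (by gcongr)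

theorem integral_inner_le_of_mem_boundedInputs (hu : u ∈ boundedInputs U μ M)
    (hf : Integrable f μ) : ∫ t, ⟪u t, f t⟫ ∂μ ≤ M * ∫ t, ‖f t‖ ∂μ := by
  rw [← integral_const_mul]
  exact integral_mono_ae (integrable_inner_of_mem_boundedInputs hu hf) (hf.norm.const_mul M)
    (ae_inner_le_of_mem_boundedInputs hu f)

theorem ae_eq_smul_normalize_of_le_integral_inner (hu : u ∈ boundedInputs U μ M)
    (hf : Integrable f μ) (hf0 : ∀ᵐ t ∂μ, f t ≠ 0)
    (h : M * ∫ t, ‖f t‖ ∂μ ≤ ∫ t, ⟪u t, f t⟫ ∂μ) :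
    u =ᵐ[μ] fun t => M • NormedSpace.normalize (f t) := by
  have hint : ∫ t, ⟪u t, f t⟫ ∂μ = ∫ t, M * ‖f t‖ ∂μ := by
    rw [integral_const_mul]
    exact (integral_inner_le_of_mem_boundedInputs hu hf).antisymm h
  have hae := (integral_eq_iff_of_ae_le (integrable_inner_of_mem_boundedInputs hu hf)
    (hf.norm.const_mul M) (ae_inner_le_of_mem_boundedInputs hu f)).1 hint
  filter_upwards [hae, hu.2, hf0] with t ht hut hft
  exact eq_smul_normalize_of_mul_norm_le_inner hft hut ht.ge

end BangBang

section Separation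

variable {X : Type*} [NormedAddCommGroup X] [InnerProductSpace ℝ X]

theorem neg_inner_add_le_inner_of_norm_add_le {x y : X} {r : ℝ} (h : ‖x + y‖ ≤ r) (η : X) :
    -(⟪η, x⟫ + r * ‖η‖) ≤ ⟪η, y⟫ := by
  have hxy : -(‖η‖ * r) ≤ ⟪η, x + y⟫ :=
    (neg_le_neg (by gcongr)).trans (neg_le_of_abs_le (abs_real_inner_le_norm η (x + y)))
  rw [inner_add_right] at hxy
  linarith

theorem inner_add_mul_norm_smul (x : X) (r : ℝ) {a : ℝ} (ha : 0 ≤ a) (η : X) :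
    ⟪a • η, x⟫ + r * ‖a • η‖ = a * (⟪η, x⟫ + r * ‖η‖) := by
  rw [real_inner_smul_left, norm_smul, Real.norm_of_nonneg ha]
  ring

theorem exists_inner_add_mul_norm_le_of_disjoint_ball [CompleteSpace X] {C : Set X} {c : X}
    {r : ℝ} (hC : Convex ℝ C) (hne : C.Nonempty) (hr : 0 < r)
    (hdisj : Disjoint (Metric.ball c r) C) :
    ∃ η : X, η ≠ 0 ∧ ∀ y ∈ C, ⟪η, y⟫ + r * ‖η‖ ≤ ⟪η, c⟫ := by
  obtain ⟨f, s, hball, hCs⟩ :=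
    geometric_hahn_banach_open (convex_ball c r) Metric.isOpen_ball hC hdisj
  obtain ⟨ζ, rfl⟩ := (InnerProductSpace.toDual ℝ X).surjective f
  simp only [InnerProductSpace.toDual_apply_apply] at hball hCs
  have hclosed : ∀ a ∈ Metric.closedBall c r, ⟪ζ, a⟫ ≤ s := by
    rw [← closure_ball c hr.ne']
    exact closure_minimal (t := {a | ⟪ζ, a⟫ ≤ s}) (fun a ha => (hball a ha).le)
      (isClosed_le (continuous_const.inner continuous_id) continuous_const)
  have hextreme : ⟪ζ, c⟫ + r * ‖ζ‖ ≤ s := by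
    rw [← inner_smul_normalize_self, real_inner_comm ζ, ← inner_add_right]
    refine hclosed _ ?_
    rw [mem_closedBall_iff_norm, add_sub_cancel_left, norm_smul, Real.norm_of_nonneg hr.le]
    exact mul_le_of_le_one_right hr.le (norm_normalize_le_one ζ)
  refine ⟨-ζ, ?_, fun y hy => ?_⟩
  · obtain ⟨y, hy⟩ := hne
    rintro hζ
    have := (hball c (Metric.mem_ball_self hr)).trans_le (hCs y hy)
    simp [neg_eq_zero.1 hζ] at this
  · rw [inner_neg_left, inner_neg_left, norm_neg]
    linarith [hCs y hy]

end Separation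

section HomogeneousMinimizer

variable {E : Type*} [SMul ℝ E] {g p : E → ℝ} {η : E}

theorem eq_neg_sq_of_forall_half_sq_add_le (hg : ∀ a : ℝ, 0 ≤ a → ∀ ξ, g (a • ξ) = a * g ξ)
    (hp : ∀ a : ℝ, 0 ≤ a → ∀ ξ, p (a • ξ) = a * p ξ)
    (hmin : ∀ ξ, 1 / 2 * g η ^ 2 + p η ≤ 1 / 2 * g ξ ^ 2 + p ξ) : p η = -g η ^ 2 := by
  have hlocal : IsLocalMin (fun a : ℝ => 1 / 2 * (a * g η) ^ 2 + a * p η) 1 := by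
    filter_upwards [lt_mem_nhds (zero_lt_one' ℝ)] with a ha
    simpa only [hg a ha.le, hp a ha.le, one_mul] using hmin (a • η)
  have hderiv : HasDerivAt (fun a : ℝ => 1 / 2 * (a * g η) ^ 2 + a * p η) (g η ^ 2 + p η) 1 := by
    convert! ((((hasDerivAt_id (1 : ℝ)).mul_const (g η)).pow 2).const_mul (1 / 2)).add
      ((hasDerivAt_id (1 : ℝ)).mul_const (p η)) using 1
    simp only [id]
    push_cast
    ring
  linarith [hlocal.hasDerivAt_eq_zero hderiv]

theorem neg_le_mul_of_forall_half_sq_add_le (hg0 : ∀ ξ, 0 ≤ g ξ)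
    (hg : ∀ a : ℝ, 0 ≤ a → ∀ ξ, g (a • ξ) = a * g ξ)
    (hp : ∀ a : ℝ, 0 ≤ a → ∀ ξ, p (a • ξ) = a * p ξ)
    (hmin : ∀ ξ, 1 / 2 * g η ^ 2 + p η ≤ 1 / 2 * g ξ ^ 2 + p ξ) (ξ : E) :
    -p ξ ≤ g η * g ξ := by
  rcases le_or_gt 0 (p ξ) with hpξ | hpξ
  · linarith [mul_nonneg (hg0 η) (hg0 ξ)]
  have hray (a : ℝ) : 0 ≤ 1 / 2 * g ξ ^ 2 * (a * a) + p ξ * a + 1 / 2 * g η ^ 2 := by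
    rcases le_total 0 a with ha | ha
    · have hmina := hmin (a • ξ)
      rw [hg a ha, hp a ha, eq_neg_sq_of_forall_half_sq_add_le hg hp hmin] at hmina
      linarith
    · linarith [mul_nonneg_of_nonpos_of_nonpos hpξ.le ha, mul_nonneg (sq_nonneg (g ξ))
        (mul_self_nonneg a), sq_nonneg (g η)]
  have hdiscrim := discrim_le_zero hray
  rw [discrim] at hdiscrim
  exact (neg_le_abs _).trans
    (abs_le_of_sq_le_sq (by linarith) (mul_nonneg (hg0 η) (hg0 ξ)))

end HomogeneousMinimizer

section ReachableSet

variable {X U α : Type*} [NormedAddCommGroup X] [NormedSpace ℝ X] [NormedAddCommGroup U]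
  [NormedSpace ℝ U] [MeasurableSpace α] {μ : Measure α} {S : α → U →L[ℝ] X} {M C : ℝ} {u : α → U}

/-- The states `∫ S(t) u(t) dμ(t)` reached from the origin by inputs bounded by `M`. -/
def reachableSet (S : α → U →L[ℝ] X) (μ : Measure α) (M : ℝ) : Set X :=
  (fun u => ∫ t, S t (u t) ∂μ) '' boundedInputs U μ M

variable [TopologicalSpace α] [SecondCountableTopology α] [TopologicalSpace.MetrizableSpace α]
  [OpensMeasurableSpace α] [IsFiniteMeasure μ]

theorem integrable_clm_apply_of_mem_boundedInputs (hS : ∀ v, Continuous fun t => S t v)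
    (hC : ∀ᵐ t ∂μ, ‖S t‖ ≤ C) (hu : u ∈ boundedInputs U μ M) :
    Integrable (fun t => S t (u t)) μ := by
  refine .of_bound (aestronglyMeasurable_clm_apply_of_continuous hS hu.1) (C * M) ?_
  filter_upwards [hC, hu.2] with t hCt hut
  exact (S t).le_of_opNorm_le_of_le hCt hut

theorem convex_reachableSet (hS : ∀ v, Continuous fun t => S t v) (hC : ∀ᵐ t ∂μ, ‖S t‖ ≤ C) :
    Convex ℝ (reachableSet S μ M) := by
  rintro _ ⟨u, hu, rfl⟩ _ ⟨v, hv, rfl⟩ a b ha hb hab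
  refine ⟨a • u + b • v, convex_boundedInputs hu hv ha hb hab, ?_⟩
  have hSu := integrable_clm_apply_of_mem_boundedInputs hS hC hu
  have hSv := integrable_clm_apply_of_mem_boundedInputs hS hC hv
  simp only [Pi.add_apply, Pi.smul_apply, map_add, map_smul]
  rw [integral_add (hSu.fun_smul a) (hSv.fun_smul b), integral_smul, integral_smul]

end ReachableSet

section DualFunctional

variable {X U α : Type*} [NormedAddCommGroup X] [InnerProductSpace ℝ X] [CompleteSpace X]
  [NormedAddCommGroup U] [InnerProductSpace ℝ U] [CompleteSpace U]
  [MeasurableSpace α] {μ : Measure α} {S : α → U →L[ℝ] X} {x ηh : X} {C r : ℝ}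

/-- The `L¹(μ; U)` norm of the adjoint output `t ↦ S(t)* η`; as a function of `η` it is the support
function of the states reached by inputs bounded by `1`. -/
noncomputable def outputNorm (S : α → U →L[ℝ] X) (μ : Measure α) (η : X) : ℝ :=
  ∫ t, ‖(S t).adjoint η‖ ∂μ

/-- The functional dual to the problem of steering the free state `x` into the closed ball of
radius `r` around the origin by an input of least `L^∞` norm. -/
noncomputable def dualFunctional (S : α → U →L[ℝ] X) (μ : Measure α) (x : X) (r : ℝ) (η : X) : ℝ :=
  1 / 2 * outputNorm S μ η ^ 2 + (⟪η, x⟫ + r * ‖η‖)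

theorem outputNorm_zero : outputNorm S μ 0 = 0 := by
  simp only [outputNorm, map_zero, norm_zero, integral_zero]

theorem outputNorm_nonneg (η : X) : 0 ≤ outputNorm S μ η :=
  integral_nonneg fun _ => norm_nonneg _

theorem outputNorm_smul {a : ℝ} (ha : 0 ≤ a) (η : X) :
    outputNorm S μ (a • η) = a * outputNorm S μ η := by
  simp only [outputNorm, map_smul, norm_smul, Real.norm_of_nonneg ha, integral_const_mul]

theorem outputNorm_sq_le_inner_of_forall_dualFunctional_le
    (hmin : ∀ ξ, dualFunctional S μ x r ηh ≤ dualFunctional S μ x r ξ) {y : X} (hy : ‖x + y‖ ≤ r) :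
    outputNorm S μ ηh ^ 2 ≤ ⟪ηh, y⟫ := by
  have hstationary : ⟪ηh, x⟫ + r * ‖ηh‖ = -outputNorm S μ ηh ^ 2 :=
    eq_neg_sq_of_forall_half_sq_add_le (p := fun η => ⟪η, x⟫ + r * ‖η‖)
      (fun _ => outputNorm_smul) (fun _ => inner_add_mul_norm_smul x r) hmin
  linarith [neg_inner_add_le_inner_of_norm_add_le hy ηh]

theorem neg_inner_add_le_mul_outputNorm_of_forall_dualFunctional_le
    (hmin : ∀ ξ, dualFunctional S μ x r ηh ≤ dualFunctional S μ x r ξ) (η : X) :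
    -(⟪η, x⟫ + r * ‖η‖) ≤ outputNorm S μ ηh * outputNorm S μ η :=
  neg_le_mul_of_forall_half_sq_add_le (p := fun η => ⟪η, x⟫ + r * ‖η‖) outputNorm_nonneg
    (fun _ => outputNorm_smul) (fun _ => inner_add_mul_norm_smul x r) hmin η

variable [TopologicalSpace α] [TopologicalSpace.SeparableSpace α] [OpensMeasurableSpace α]
  [IsFiniteMeasure μ] (hS : ∀ v, Continuous fun t => S t v) (hC : ∀ᵐ t ∂μ, ‖S t‖ ≤ C)

include hS hC

theorem integrable_adjoint_apply (η : X) : Integrable (fun t => (S t).adjoint η) μ := by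
  refine .of_bound (stronglyMeasurable_adjoint_apply hS η).aestronglyMeasurable (C * ‖η‖) ?_
  filter_upwards [hC] with t ht
  exact (S t).adjoint.le_of_opNorm_le ((LinearIsometryEquiv.norm_map _ _).trans_le ht) η

theorem outputNorm_pos [NeZero μ] {η : X} (hη : ∀ᵐ t ∂μ, (S t).adjoint η ≠ 0) :
    0 < outputNorm S μ η := by
  refine (outputNorm_nonneg η).lt_of_ne' fun hzero => ?_
  have hae := (integral_eq_zero_iff_of_nonneg (fun _ => norm_nonneg _)
    (integrable_adjoint_apply hS hC η).norm).1 hzero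
  obtain ⟨t, ht0, ht⟩ := (hae.and hη).exists
  exact ht (norm_eq_zero.1 ht0)

end DualFunctional

section NormOptimalControl

variable {X U α : Type*} [NormedAddCommGroup X] [InnerProductSpace ℝ X] [CompleteSpace X]
  [NormedAddCommGroup U] [InnerProductSpace ℝ U] [CompleteSpace U]
  [TopologicalSpace α] [SecondCountableTopology α] [TopologicalSpace.MetrizableSpace α]
  [MeasurableSpace α] [OpensMeasurableSpace α] {μ : Measure α} [IsFiniteMeasure μ]
  {S : α → U →L[ℝ] X} {x ηh : X} {M C r : ℝ} {u : α → U}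
  (hS : ∀ v, Continuous fun t => S t v) (hC : ∀ᵐ t ∂μ, ‖S t‖ ≤ C)

include hS hC

theorem inner_integral_clm_apply (hu : u ∈ boundedInputs U μ M) (η : X) :
    ⟪η, ∫ t, S t (u t) ∂μ⟫ = ∫ t, ⟪u t, (S t).adjoint η⟫ ∂μ := by
  rw [← integral_inner (integrable_clm_apply_of_mem_boundedInputs hS hC hu)]
  simp only [ContinuousLinearMap.adjoint_inner_right, real_inner_comm]

theorem inner_le_mul_outputNorm_of_mem_reachableSet {y : X} (hy : y ∈ reachableSet S μ M)
    (η : X) : ⟪η, y⟫ ≤ M * outputNorm S μ η := by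
  obtain ⟨u, hu, rfl⟩ := hy
  rw [inner_integral_clm_apply hS hC hu]
  exact integral_inner_le_of_mem_boundedInputs hu (integrable_adjoint_apply hS hC η)

theorem exists_mem_reachableSet_inner_eq (hM : 0 ≤ M) (η : X) :
    ∃ y ∈ reachableSet S μ M, ⟪η, y⟫ = M * outputNorm S μ η := by
  have hmem := smul_normalize_mem_boundedInputs hM (integrable_adjoint_apply hS hC η).1
  refine ⟨_, ⟨_, hmem, rfl⟩, ?_⟩
  simp only [inner_integral_clm_apply hS hC hmem, inner_smul_normalize_self, integral_const_mul,
    outputNorm]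

theorem exists_mul_outputNorm_le_of_forall_le_norm_add (hM : 0 ≤ M) (hr : 0 < r)
    (hball : ∀ y ∈ reachableSet S μ M, r ≤ ‖x + y‖) :
    ∃ η : X, η ≠ 0 ∧ M * outputNorm S μ η ≤ -(⟪η, x⟫ + r * ‖η‖) := by
  have hdisj : Disjoint (Metric.ball (-x) r) (reachableSet S μ M) :=
    Set.disjoint_left.2 fun y hy hyR => by
      rw [mem_ball_iff_norm, sub_neg_eq_add, add_comm] at hy
      exact hy.not_ge (hball y hyR)
  have hne : (reachableSet S μ M).Nonempty :=
    (exists_mem_reachableSet_inner_eq hS hC hM 0).imp fun _ h => h.1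
  obtain ⟨η, hη, hsep⟩ :=
    exists_inner_add_mul_norm_le_of_disjoint_ball (convex_reachableSet hS hC) hne hr hdisj
  obtain ⟨y, hy, hyη⟩ := exists_mem_reachableSet_inner_eq hS hC hM η
  have hsepy := hsep y hy
  rw [inner_neg_right] at hsepy
  exact ⟨η, hη, by linarith⟩

variable (hmin : ∀ ξ, dualFunctional S μ x r ηh ≤ dualFunctional S μ x r ξ)

include hmin

theorem outputNorm_le_of_mem_reachableSet (hM : 0 ≤ M) {y : X} (hy : y ∈ reachableSet S μ M)
    (hxy : ‖x + y‖ ≤ r) : outputNorm S μ ηh ≤ M := by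
  have hsq : outputNorm S μ ηh * outputNorm S μ ηh ≤ M * outputNorm S μ ηh :=
    (sq _).symm.trans_le <| (outputNorm_sq_le_inner_of_forall_dualFunctional_le hmin hxy).trans
      (inner_le_mul_outputNorm_of_mem_reachableSet hS hC hy ηh)
  by_contra! hlt
  exact hlt.not_ge (le_of_mul_le_mul_right hsq (hM.trans_lt hlt))

theorem le_outputNorm_of_forall_le_norm_add [NeZero μ] (hM : 0 ≤ M) (hr : 0 < r)
    (hne : ∀ η ≠ 0, ∀ᵐ t ∂μ, (S t).adjoint η ≠ 0)
    (hball : ∀ y ∈ reachableSet S μ M, r ≤ ‖x + y‖) : M ≤ outputNorm S μ ηh := by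
  obtain ⟨η, hη, hle⟩ := exists_mul_outputNorm_le_of_forall_le_norm_add hS hC hM hr hball
  exact le_of_mul_le_mul_right
    (hle.trans (neg_inner_add_le_mul_outputNorm_of_forall_dualFunctional_le hmin η))
    (outputNorm_pos hS hC (hne η hη))

theorem ae_eq_smul_normalize_of_norm_add_integral_le (hηh : ∀ᵐ t ∂μ, (S t).adjoint ηh ≠ 0)
    (hnorm : outputNorm S μ ηh = M) (hu : u ∈ boundedInputs U μ M)
    (hxu : ‖x + ∫ t, S t (u t) ∂μ‖ ≤ r) :
    u =ᵐ[μ] fun t => M • NormedSpace.normalize ((S t).adjoint ηh) := by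
  refine ae_eq_smul_normalize_of_le_integral_inner hu (integrable_adjoint_apply hS hC ηh) hηh ?_
  rw [← inner_integral_clm_apply hS hC hu]
  refine le_of_eq_of_le ?_ (outputNorm_sq_le_inner_of_forall_dualFunctional_le hmin hxu)
  rw [sq, ← hnorm, outputNorm]

end NormOptimalControl

section AdmissibleControls

variable {U : Type*} [NormedAddCommGroup U] {M : ℝ} {u : ℝ → U}

theorem admissible_comp_add_right {h : ℝ} (hh : 0 ≤ h) (hu : admissible M u) :
    admissible M fun t => u (t + h) :=
  comp_mem_boundedInputs hu <|
    (measurePreserving_add_right volume h).quasiMeasurePreserving.restrict fun _ ht =>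
      add_pos_of_pos_of_nonneg ht hh

theorem mem_boundedInputs_of_admissible (hu : admissible M u) (τ : ℝ) :
    u ∈ boundedInputs U (volume.restrict (Set.Ioc 0 τ)) M :=
  boundedInputs_subset_of_absolutelyContinuous
    (Measure.absolutelyContinuous_of_le (Measure.restrict_mono Set.Ioc_subset_Ioi_self le_rfl)) hu

end AdmissibleControls

section Trajectories

variable {X U : Type*} [NormedAddCommGroup X] [NormedSpace ℝ X] [NormedAddCommGroup U]
  [NormedSpace ℝ U] {T : ℝ → X →L[ℝ] X} {B : U →L[ℝ] X} {ψ : X} {M r τ : ℝ} {u v : ℝ → U}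

/-- The operator `T_{τ-t} B` carrying an input at time `t` to its contribution to the state at the
final time `τ`. -/
def inputOperator (T : ℝ → X →L[ℝ] X) (B : U →L[ℝ] X) (τ t : ℝ) : U →L[ℝ] X :=
  (T (τ - t)).comp B

theorem continuous_inputOperator_apply (hT : ∀ x, Continuous fun t => T t x) (τ : ℝ) (v : U) :
    Continuous fun t => inputOperator T B τ t v :=
  (hT (B v)).comp (continuous_const.sub continuous_id)

theorem exists_ae_norm_inputOperator_le [CompleteSpace U] (hT : ∀ x, Continuous fun t => T t x)
    (τ : ℝ) : ∃ C, ∀ᵐ t ∂volume.restrict (Set.Ioc 0 τ), ‖inputOperator T B τ t‖ ≤ C := by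
  obtain ⟨C, hC⟩ := exists_forall_opNorm_le_of_isCompact (isCompact_Icc (a := (0 : ℝ)) (b := τ))
    (continuous_inputOperator_apply (B := B) hT τ)
  exact ⟨C, ae_restrict_of_forall_mem measurableSet_Ioc fun t ht =>
    hC t (Set.Ioc_subset_Icc_self ht)⟩

variable [CompleteSpace X]

/-- The times at which some control bounded by `M` brings the trajectory issued from `ψ` into the
closed ball of radius `r` around the origin; the optimal time is the least of them. -/
def feasibleTimes (T : ℝ → X →L[ℝ] X) (B : U →L[ℝ] X) (r M : ℝ) (ψ : X) : Set ℝ :=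
  {t : ℝ | 0 ≤ t ∧ ∃ u : ℝ → U, admissible M u ∧ traj T B ψ u t ∈ Metric.closedBall (0 : X) r}

theorem traj_congr (huv : u =ᵐ[volume.restrict (Set.Ioc 0 τ)] v) :
    traj T B ψ u τ = traj T B ψ v τ :=
  congrArg (T τ ψ + ·) <| integral_congr_ae <| huv.mono fun t ht =>
    congrArg (fun w => T (τ - t) (B w)) ht

theorem exists_admissible_traj_eq_of_mem_reachableSet (hM : 0 ≤ M) {y : X}
    (hy : y ∈ reachableSet (inputOperator T B τ) (volume.restrict (Set.Ioc 0 τ)) M) :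
    ∃ u : ℝ → U, admissible M u ∧ traj T B ψ u τ = T τ ψ + y := by
  obtain ⟨v, hv, rfl⟩ := hy
  have hvae : (Set.Ioc 0 τ).indicator v =ᵐ[volume.restrict (Set.Ioc 0 τ)] v :=
    indicator_ae_eq_restrict measurableSet_Ioc
  exact ⟨_, boundedInputs_subset_of_absolutelyContinuous Measure.absolutelyContinuous_restrict
    (indicator_mem_boundedInputs hM measurableSet_Ioc hv), traj_congr hvae⟩

theorem traj_comp_add_right {h : ℝ} (hhτ : h ≤ τ) :
    traj T B ψ (fun t => u (t + h)) (τ - h) =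
      T (τ - h) ψ + ∫ s in h..τ, T (τ - s) (B (u s)) := by
  rw [traj, ← intervalIntegral.integral_of_le (sub_nonneg.2 hhτ)]
  simpa only [sub_sub, add_comm h, sub_add_cancel, zero_add] using
    congrArg (T (τ - h) ψ + ·)
      (intervalIntegral.integral_comp_add_right (a := 0) (b := τ - h)
        (fun s => T (τ - s) (B (u s))) h)

theorem exists_lt_traj_mem_of_isOpen [CompleteSpace U] (hT : ∀ x, Continuous fun t => T t x)
    (hτ : 0 < τ) (hu : admissible M u) {O : Set X} (hO : IsOpen O) (hmem : traj T B ψ u τ ∈ O) :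
    ∃ t, 0 ≤ t ∧ t < τ ∧ ∃ v : ℝ → U, admissible M v ∧ traj T B ψ v t ∈ O := by
  obtain ⟨C, hC⟩ := exists_ae_norm_inputOperator_le (B := B) hT τ
  have hint : IntegrableOn (fun s => inputOperator T B τ s (u s)) (Set.uIcc 0 τ) := by
    rw [Set.uIcc_of_le hτ.le, integrableOn_Icc_iff_integrableOn_Ioc]
    exact integrable_clm_apply_of_mem_boundedInputs (continuous_inputOperator_apply hT τ) hC
      (mem_boundedInputs_of_admissible hu τ)
  have hcont : ContinuousWithinAt
      (fun h => T (τ - h) ψ + ∫ s in h..τ, T (τ - s) (B (u s))) (Set.uIcc 0 τ) 0 :=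
    ((hT ψ).comp (continuous_const.sub continuous_id)).continuousWithinAt.add
      (intervalIntegral.continuousOn_primitive_interval_left hint 0 Set.left_mem_uIcc)
  have hmem0 : T (τ - 0) ψ + ∫ s in 0..τ, T (τ - s) (B (u s)) ∈ O := by
    rw [← traj_comp_add_right hτ.le]
    simpa only [sub_zero, add_zero] using hmem
  have hIcc : Set.uIcc 0 τ ∈ 𝓝[>] (0 : ℝ) := by
    rw [Set.uIcc_of_le hτ.le]
    exact Icc_mem_nhdsGT hτ
  have hnear := (hcont.mono_of_mem_nhdsWithin hIcc).eventually (hO.mem_nhds hmem0)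
  obtain ⟨h, hhO, hh0, hhτ⟩ := (hnear.and (Ioc_mem_nhdsGT hτ)).exists
  refine ⟨τ - h, sub_nonneg.2 hhτ, sub_lt_self τ hh0, _, admissible_comp_add_right hh0.le hu, ?_⟩
  rwa [traj_comp_add_right hhτ]

theorem le_norm_traj_of_mem_lowerBounds [CompleteSpace U] (hT : ∀ x, Continuous fun t => T t x)
    (hτ : 0 < τ) (hlower : τ ∈ lowerBounds (feasibleTimes T B r M ψ)) (hu : admissible M u) :
    r ≤ ‖traj T B ψ u τ‖ := by
  by_contra! hlt
  obtain ⟨t, ht0, htτ, v, hv, hvt⟩ := exists_lt_traj_mem_of_isOpen hT hτ hu Metric.isOpen_ball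
    (mem_ball_zero_iff.2 hlt)
  exact htτ.not_ge (hlower ⟨ht0, v, hv, Metric.ball_subset_closedBall hvt⟩)

theorem pos_of_mem_feasibleTimes (hψ : T 0 ψ ∉ Metric.closedBall (0 : X) r)
    (hτ : τ ∈ feasibleTimes T B r M ψ) : 0 < τ := by
  obtain ⟨hτ0, u, -, hur⟩ := hτ
  refine hτ0.lt_of_ne ?_
  rintro rfl
  simp only [traj, Set.Ioc_self, setIntegral_empty, add_zero] at hur
  exact hψ hur

end Trajectories

section TimeOptimalControl

variable {X U : Type*} [NormedAddCommGroup X] [InnerProductSpace ℝ X] [CompleteSpace X]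
  [NormedAddCommGroup U] [InnerProductSpace ℝ U] [CompleteSpace U]
  {T : ℝ → X →L[ℝ] X} {B : U →L[ℝ] X} {ψ ηh : X} {M r τ : ℝ}

theorem adjoint_inputOperator_apply (τ t : ℝ) (η : X) :
    (inputOperator T B τ t).adjoint η = B.adjoint ((T (τ - t)).adjoint η) := by
  rw [inputOperator, ContinuousLinearMap.adjoint_comp, ContinuousLinearMap.comp_apply]

theorem Jfun_eq_dualFunctional (η : X) : Jfun T B r ψ τ η =
    dualFunctional (inputOperator T B τ) (volume.restrict (Set.Ioc 0 τ)) (T τ ψ) r η := by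
  simp only [Jfun, dualFunctional, outputNorm, adjoint_inputOperator_apply,
    ContinuousLinearMap.adjoint_inner_right, real_inner_comm η, add_assoc]

/-- The unique continuation property of the adjoint output: a state whose output `t ↦ B* T_t* η`
vanishes on a set of positive measure is zero. -/
def UniqueContinuation (T : ℝ → X →L[ℝ] X) (B : U →L[ℝ] X) : Prop :=
  ∀ η : X, ∀ s : Set ℝ, MeasurableSet s → 0 < volume s →
    (∀ t ∈ s, B.adjoint ((T t).adjoint η) = 0) → η = 0

variable (hT : ∀ x, Continuous fun t => T t x) (hUC : UniqueContinuation T B)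

include hT hUC

theorem ae_adjoint_inputOperator_ne_zero (τ : ℝ) {η : X} (hη : η ≠ 0) :
    ∀ᵐ t, (inputOperator T B τ t).adjoint η ≠ 0 := by
  have hmeas : StronglyMeasurable fun t => B.adjoint ((T t).adjoint η) :=
    B.adjoint.continuous.comp_stronglyMeasurable (stronglyMeasurable_adjoint_apply hT η)
  have hnull : ∀ᵐ t, B.adjoint ((T t).adjoint η) ≠ 0 := by
    by_contra hpos
    simp only [ae_iff, not_not, ne_eq] at hpos
    exact hη (hUC η _ (hmeas.measurableSet_eq_fun stronglyMeasurable_const)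
      (pos_iff_ne_zero.2 hpos) fun _ ht => ht)
  simp only [adjoint_inputOperator_apply]
  exact (volume.measurePreserving_sub_left τ).quasiMeasurePreserving.ae hnull

theorem outputNorm_eq_of_isLeast_feasibleTimes (hr : 0 < r) (hM : 0 ≤ M) (hτ : 0 < τ)
    (hleast : IsLeast (feasibleTimes T B r M ψ) τ)
    (hmin : ∀ ξ, Jfun T B r ψ τ ηh ≤ Jfun T B r ψ τ ξ) :
    outputNorm (inputOperator T B τ) (volume.restrict (Set.Ioc 0 τ)) ηh = M := by
  obtain ⟨⟨-, u, hu, hur⟩, hlower⟩ := hleast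
  have hS := continuous_inputOperator_apply (B := B) hT τ
  obtain ⟨C, hC⟩ := exists_ae_norm_inputOperator_le (B := B) hT τ
  simp only [Jfun_eq_dualFunctional] at hmin
  refine le_antisymm ?_ ?_
  · exact outputNorm_le_of_mem_reachableSet hS hC hmin hM
      ⟨u, mem_boundedInputs_of_admissible hu τ, rfl⟩ (mem_closedBall_zero_iff.1 hur)
  · have : NeZero (volume.restrict (Set.Ioc 0 τ)) :=
      ⟨by simpa only [ne_eq, Measure.restrict_eq_zero, Real.volume_Ioc, sub_zero,
        ENNReal.ofReal_eq_zero, not_le] using hτ⟩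
    refine le_outputNorm_of_forall_le_norm_add hS hC hmin hM hr
      (fun η hη => ae_restrict_of_ae (ae_adjoint_inputOperator_ne_zero hT hUC τ hη)) fun y hy => ?_
    obtain ⟨v, hv, hvy⟩ := exists_admissible_traj_eq_of_mem_reachableSet (ψ := ψ) hM hy
    exact hvy ▸ le_norm_traj_of_mem_lowerBounds hT hτ hlower hv

theorem ae_eq_smul_normalize_of_traj_mem_closedBall {u : ℝ → U} (hηh : ηh ≠ 0)
    (hmin : ∀ ξ, Jfun T B r ψ τ ηh ≤ Jfun T B r ψ τ ξ)
    (hnorm : outputNorm (inputOperator T B τ) (volume.restrict (Set.Ioc 0 τ)) ηh = M)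
    (hu : admissible M u) (hur : traj T B ψ u τ ∈ Metric.closedBall (0 : X) r) :
    u =ᵐ[volume.restrict (Set.Ioc 0 τ)]
      fun t => M • NormedSpace.normalize ((inputOperator T B τ t).adjoint ηh) := by
  obtain ⟨C, hC⟩ := exists_ae_norm_inputOperator_le (B := B) hT τ
  simp only [Jfun_eq_dualFunctional] at hmin
  exact ae_eq_smul_normalize_of_norm_add_integral_le (continuous_inputOperator_apply hT τ) hC hmin
    (ae_restrict_of_ae (ae_adjoint_inputOperator_ne_zero hT hUC τ hηh)) hnorm
    (mem_boundedInputs_of_admissible hu τ) (mem_closedBall_zero_iff.1 hur)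

end TimeOptimalControl

theorem stmt17_general {X U : Type*} [NormedAddCommGroup X] [InnerProductSpace ℝ X]
    [CompleteSpace X] [NormedAddCommGroup U] [InnerProductSpace ℝ U] [CompleteSpace U]
    (T : ℝ → X →L[ℝ] X) (B : U →L[ℝ] X) (hTcont : ∀ x : X, Continuous fun t => T t x)
    (hUC : UniqueContinuation T B) (r M : ℝ) (hr : 0 < r) (hM : 0 < M)
    (ψ : X) (hψ : T 0 ψ ∉ Metric.closedBall (0 : X) r)
    (τs : ℝ) (hτs : IsLeast (feasibleTimes T B r M ψ) τs)
    (ηh : X) (hηh : ∀ ξ : X, Jfun T B r ψ τs ηh ≤ Jfun T B r ψ τs ξ) :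
    ηh ≠ 0 ∧
    ∀ us : ℝ → U, (∀ t : ℝ,
        us t = M • (‖B.adjoint ((T (τs - t)).adjoint ηh)‖⁻¹ •
          B.adjoint ((T (τs - t)).adjoint ηh))) →
      (admissible M us ∧ traj T B ψ us τs ∈ Metric.closedBall (0 : X) r) ∧
      (∀ u : ℝ → U, admissible M u → traj T B ψ u τs ∈ Metric.closedBall (0 : X) r →
        ∀ᵐ t ∂volume.restrict (Set.Ioo 0 τs), u t = us t) := by
  have hnorm := outputNorm_eq_of_isLeast_feasibleTimes hTcont hUC hr hM.le
    (pos_of_mem_feasibleTimes hψ hτs.1) hτs hηh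
  have hηh0 : ηh ≠ 0 := by
    rintro rfl
    exact hM.ne (outputNorm_zero.symm.trans hnorm)
  refine ⟨hηh0, fun us hus => ?_⟩
  obtain rfl : us = fun t => M • NormedSpace.normalize ((inputOperator T B τs t).adjoint ηh) :=
    funext fun t => by rw [hus t, adjoint_inputOperator_apply, NormedSpace.normalize]
  have hunique {u : ℝ → U} := ae_eq_smul_normalize_of_traj_mem_closedBall (u := u) (ψ := ψ)
    hTcont hUC hηh0 hηh hnorm
  obtain ⟨-, u, hu, hur⟩ := hτs.1
  have hadm := smul_normalize_mem_boundedInputs (μ := volume.restrict (Set.Ioi 0)) hM.le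
    (stronglyMeasurable_adjoint_apply (continuous_inputOperator_apply (B := B) hTcont τs)
      ηh).aestronglyMeasurable
  exact ⟨⟨hadm, by rwa [← traj_congr (hunique hu hur)]⟩, fun u hu hur =>
    ae_restrict_of_ae_restrict_of_subset Set.Ioo_subset_Ioc_self (hunique hu hur)⟩

/-- (Representation of the time optimal control.) Under the observability
and unique continuation assumptions, let `M > 0`, `τ*(M)` the optimal time of `(TP)^M` and
`η̂` the minimizer of `J^{τ*(M)}`. Then `η̂ ≠ 0` and the unique time optimal control is
`u*(t) = M · B*T*_{τ*(M)-t}η̂ / ‖B*T*_{τ*(M)-t}η̂‖` for a.e. `t ∈ (0,τ*(M))`. -/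
theorem stmt17 {X U : Type*} [NormedAddCommGroup X] [InnerProductSpace ℝ X] [CompleteSpace X]
    [NormedAddCommGroup U] [InnerProductSpace ℝ U] [CompleteSpace U]
    (T : ℝ → X →L[ℝ] X) (B : U →L[ℝ] X)
    -- `T` is a `C₀`-semigroup of contractions (generated by `-A`)
    (hT0 : T 0 = 1)
    (hTadd : ∀ s t : ℝ, 0 ≤ s → 0 ≤ t → T (s + t) = (T s).comp (T t))
    (hTcont : ∀ x : X, Continuous fun t => T t x)
    (hTcontr : ∀ t : ℝ, 0 ≤ t → ‖T t‖ ≤ 1)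
    -- the `L¹` observability inequality
    (K : ℝ → ℝ) (hK_pos : ∀ τ : ℝ, 0 < τ → 0 < K τ) (hK_cont : ContinuousOn K (Set.Ioi 0))
    (hobs : ∀ τ : ℝ, 0 < τ → ∀ η : X,
      ‖(T τ).adjoint η‖ ≤ K τ * ∫ t in Set.Ioc 0 τ, ‖B.adjoint ((T t).adjoint η)‖)
    -- unique continuation
    (hUC : ∀ η : X, ∀ s : Set ℝ, MeasurableSet s → 0 < volume s →
      (∀ t ∈ s, B.adjoint ((T t).adjoint η) = 0) → η = 0)
    (r M : ℝ) (hr : 0 < r) (hM : 0 < M)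
    (ψ : X) (hψ : ψ ∉ Metric.closedBall (0 : X) r)
    -- `τ*(M)` is the optimal time for `(TP)^M`
    (τs : ℝ)
    (hτs : IsLeast {t : ℝ | 0 ≤ t ∧ ∃ u : ℝ → U, admissible M u ∧
      traj T B ψ u t ∈ Metric.closedBall (0 : X) r} τs)
    -- `η̂` is the minimizer of `J^{τ*(M)}`
    (ηh : X) (hηh : ∀ ξ : X, Jfun T B r ψ τs ηh ≤ Jfun T B r ψ τs ξ) :
    ηh ≠ 0 ∧
    ∀ us : ℝ → U, (∀ t : ℝ,
        us t = M • (‖B.adjoint ((T (τs - t)).adjoint ηh)‖⁻¹ •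
          B.adjoint ((T (τs - t)).adjoint ηh))) →
      -- `u*` is a time optimal control
      (admissible M us ∧ traj T B ψ us τs ∈ Metric.closedBall (0 : X) r) ∧
      -- and it is the unique one
      (∀ u : ℝ → U, admissible M u → traj T B ψ u τs ∈ Metric.closedBall (0 : X) r →
        ∀ᵐ t ∂volume.restrict (Set.Ioo 0 τs), u t = us t) :=
  stmt17_general T B hTcont hUC r M hr hM ψ (by rwa [hT0, one_apply_eq_self]) τs hτs ηh hηh
end

section
/- (Convergence of minimizers.) Under assumptions (C1)-(C4), if τ_ε → τ_0 > 0 and η̂_ε denotes the minimizer of J_ε^{τ_ε} for each ε ≥ 0, then η̂_ε → η̂_0 strongly in X as ε → 0+; consequently the optimal values V*_ε(τ) = min J_ε^τ and the minimal norms N*_ε(τ) converge to V*_0(τ) and N*_0(τ) respectively, for each τ ∈ (0,τ̂). -/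
open MeasureTheory Filter
open scoped RealInnerProductSpace

/-- The functional `J_ε^τ(η) = ½(∫_0^τ ‖B*T^ε_{τ-t}η‖ dt)² + ⟨ψ, T^ε_τ η⟩ + r‖η‖`
(the semigroups `T^ε` are self-adjoint, so `T^ε* = T^ε`). -/
noncomputable def Jeps {X U : Type*} [NormedAddCommGroup X] [InnerProductSpace ℝ X]
    [CompleteSpace X] [NormedAddCommGroup U] [InnerProductSpace ℝ U] [CompleteSpace U]
    (Tε : ℝ → X →L[ℝ] X) (B : U →L[ℝ] X) (r : ℝ) (ψ : X) (τ : ℝ) (η : X) : ℝ :=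
  (1 / 2) * (∫ t in Set.Ioc 0 τ, ‖B.adjoint (Tε (τ - t) η)‖) ^ 2 +
    ⟪ψ, Tε τ η⟫ + r * ‖η‖

/-!
The form bound makes every resolvent `A_ε⁻¹` a positive operator dominated by a multiple of the
compact operator `A₀⁻¹`, so strong convergence of the resolvents improves to convergence in operator
norm. Duhamel's formula compares the semigroups only after composition with the resolvents; since
`t ‖T_t x‖ ≤ ‖A⁻¹ x‖`, this still gives convergence in operator norm, uniformly on compact subsets
of `(0, ∞)`, and hence `J_ε → J_0` uniformly on bounded sets. Finally, by observability and the
parallelogram law every minimizing sequence of `J_0` converges, and by convexity of the `J_ε` such a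
well-posed minimum is stable under uniform convergence on a ball around it.
-/

open scoped Topology

section PositiveOperators

lemma exists_finite_subset_closedBall_norm_map_sub_lt {E F : Type*}
    [SeminormedAddCommGroup E] [NormedSpace ℝ E] [NormedAddCommGroup F] [NormedSpace ℝ F]
    {R : E →L[ℝ] F} (hR : IsCompactOperator R) {δ : ℝ} (hδ : 0 < δ) :
    ∃ s ⊆ Metric.closedBall (0 : E) 1, s.Finite ∧
      ∀ x ∈ Metric.closedBall (0 : E) 1, ∃ y ∈ s, ‖R (x - y)‖ < δ := by
  obtain ⟨s, hs, hsfin, hcover⟩ := Set.exists_subset_image_finite_and.1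
    (exists_finite_cover_balls_of_isCompact_closure (hR.isCompact_closure_image_closedBall 1) hδ)
  refine ⟨s, hs, hsfin, fun x hx => ?_⟩
  simpa [map_sub, dist_eq_norm] using hcover (Set.mem_image_of_mem R hx)

-- A net that is fine for `R₀` is fine for every `R a`, so finitely many pointwise limits suffice.
lemma tendsto_of_isCompactOperator_of_norm_apply_sq_le {α E F : Type*}
    [NormedAddCommGroup E] [NormedSpace ℝ E] [NormedAddCommGroup F] [NormedSpace ℝ F]
    {l : Filter α} {R : α → E →L[ℝ] F} {R₀ : E →L[ℝ] F} {C : ℝ} (hC : 0 ≤ C)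
    (hcpt : IsCompactOperator R₀) (hle : ∀ᶠ a in l, ∀ x, ‖R a x‖ ^ 2 ≤ C * (‖R₀ x‖ * ‖x‖))
    (hlim : ∀ x, Tendsto (fun a => R a x) l (𝓝 (R₀ x))) : Tendsto R l (𝓝 R₀) := by
  have herror : Tendsto (fun δ : ℝ => δ + √(C * (δ * 2)) + δ) (𝓝[>] 0) (𝓝 0) := by
    have hcont : Continuous fun δ : ℝ => δ + √(C * (δ * 2)) + δ := by fun_prop
    simpa using (hcont.tendsto 0).mono_left nhdsWithin_le_nhds
  rw [Metric.tendsto_nhds]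
  intro κ hκ
  obtain ⟨δ, hδκ, hδ : 0 < δ⟩ :=
    ((herror.eventually (gt_mem_nhds hκ)).and self_mem_nhdsWithin).exists
  obtain ⟨s, hs, hsfin, hnet⟩ := exists_finite_subset_closedBall_norm_map_sub_lt hcpt hδ
  have hclose : ∀ᶠ a in l, ∀ y ∈ s, ‖R a y - R₀ y‖ < δ :=
    (hsfin.eventually_all).2 fun y _ => by
      simpa only [dist_eq_norm] using Metric.tendsto_nhds.1 (hlim y) δ hδ
  filter_upwards [hle, hclose] with a hle hclose
  rw [dist_eq_norm]
  refine lt_of_le_of_lt (ContinuousLinearMap.opNorm_le_of_unit_norm (by positivity) ?_) hδκ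
  intro x hx
  obtain ⟨y, hy, hxy⟩ := hnet x (by simp [hx])
  have hy1 : ‖y‖ ≤ 1 := by simpa using hs hy
  have hxy2 : ‖x - y‖ ≤ 2 := (norm_sub_le x y).trans (by linarith)
  have hRa : ‖R a (x - y)‖ ≤ √(C * (δ * 2)) :=
    Real.le_sqrt_of_sq_le ((hle (x - y)).trans (by gcongr))
  calc ‖(R a - R₀) x‖ = ‖(R a y - R₀ y) + R a (x - y) - R₀ (x - y)‖ := by
        simp only [sub_apply, map_sub]; congr 1; abel
    _ ≤ ‖R a y - R₀ y‖ + ‖R a (x - y)‖ + ‖R₀ (x - y)‖ :=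
        (norm_sub_le _ _).trans (by gcongr; exact norm_add_le _ _)
    _ ≤ δ + √(C * (δ * 2)) + δ := by gcongr; exact (hclose y hy).le

variable {X : Type*} [NormedAddCommGroup X] [InnerProductSpace ℝ X]

lemma inner_apply_sq_le_of_isPositive {R : X →L[ℝ] X} (hR : R.IsPositive) (x y : X) :
    ⟪R x, y⟫ ^ 2 ≤ ⟪R x, x⟫ * ⟪R y, y⟫ :=
  LinearMap.BilinForm.apply_sq_le_of_symm ((innerₗ X).comp R.toLinearMap)
    hR.inner_nonneg_left ⟨fun x y => (hR.isSymmetric x y).trans (real_inner_comm _ _)⟩ x y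

lemma norm_apply_sq_le_of_isPositive {R : X →L[ℝ] X} (hR : R.IsPositive) (x : X) :
    ‖R x‖ ^ 2 ≤ ‖R‖ * ⟪R x, x⟫ := by
  rcases (sq_nonneg ‖R x‖).eq_or_lt with hzero | hpos
  · rw [← hzero]
    exact mul_nonneg (norm_nonneg _) (hR.inner_nonneg_left x)
  refine le_of_mul_le_mul_right ?_ hpos
  calc ‖R x‖ ^ 2 * ‖R x‖ ^ 2 = ⟪R x, R x⟫ ^ 2 := by rw [real_inner_self_eq_norm_sq]; ring
    _ ≤ ⟪R x, x⟫ * ⟪R (R x), R x⟫ := inner_apply_sq_le_of_isPositive hR x (R x)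
    _ ≤ ⟪R x, x⟫ * (‖R‖ * ‖R x‖ * ‖R x‖) := by
        refine mul_le_mul_of_nonneg_left ?_ (hR.inner_nonneg_left x)
        exact (real_inner_le_norm _ _).trans (by gcongr; exact R.le_opNorm _)
    _ = ‖R‖ * ⟪R x, x⟫ * ‖R x‖ ^ 2 := by ring

lemma inner_apply_self_le_of_le {R S : X →L[ℝ] X} (hRS : R ≤ S) (x : X) :
    ⟪R x, x⟫ ≤ ‖S x‖ * ‖x‖ := by
  have hdiff : 0 ≤ ⟪(S - R) x, x⟫ := ContinuousLinearMap.IsPositive.inner_nonneg_left hRS x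
  rw [sub_apply, inner_sub_left] at hdiff
  linarith [real_inner_le_norm (S x) x]

lemma opNorm_le_opNorm_of_isPositive_of_le {R S : X →L[ℝ] X} (hR : R.IsPositive) (hRS : R ≤ S) :
    ‖R‖ ≤ ‖S‖ := by
  have hsqrt : ‖R‖ ≤ √(‖R‖ * ‖S‖) := by
    refine ContinuousLinearMap.opNorm_le_of_unit_norm (Real.sqrt_nonneg _) fun x hx => ?_
    refine Real.le_sqrt_of_sq_le ((norm_apply_sq_le_of_isPositive hR x).trans ?_)
    gcongr
    calc ⟪R x, x⟫ ≤ ‖S x‖ * ‖x‖ := inner_apply_self_le_of_le hRS x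
      _ ≤ ‖S‖ := by rw [hx, mul_one]; exact S.unit_le_opNorm x hx.le
  rcases (norm_nonneg R).eq_or_lt with hzero | hpos
  · exact hzero ▸ norm_nonneg S
  · exact le_of_mul_le_mul_left (by simpa only [sq] using (Real.le_sqrt' hpos).1 hsqrt) hpos

lemma tendsto_of_isCompactOperator_of_le_smul {α : Type*} {l : Filter α} {R : α → X →L[ℝ] X}
    {R₀ : X →L[ℝ] X} {c : ℝ} (hcpt : IsCompactOperator R₀) (hpos : ∀ᶠ a in l, (R a).IsPositive)
    (hle : ∀ᶠ a in l, R a ≤ c • R₀) (hlim : ∀ x, Tendsto (fun a => R a x) l (𝓝 (R₀ x))) :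
    Tendsto R l (𝓝 R₀) := by
  refine tendsto_of_isCompactOperator_of_norm_apply_sq_le (C := ‖c • R₀‖ * |c|)
    (by positivity) hcpt ?_ hlim
  filter_upwards [hpos, hle] with a hpos hle x
  calc ‖R a x‖ ^ 2 ≤ ‖R a‖ * ⟪R a x, x⟫ := norm_apply_sq_le_of_isPositive hpos x
    _ ≤ ‖c • R₀‖ * (‖(c • R₀) x‖ * ‖x‖) :=
        mul_le_mul (opNorm_le_opNorm_of_isPositive_of_le hpos hle)
          (inner_apply_self_le_of_le hle x) (hpos.inner_nonneg_left x) (norm_nonneg _)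
    _ = ‖c • R₀‖ * |c| * (‖R₀ x‖ * ‖x‖) := by
        rw [smul_apply, norm_smul c (R₀ x), Real.norm_eq_abs]; ring

end PositiveOperators

section Inverses

variable {X X₁ : Type*} [NormedAddCommGroup X] [InnerProductSpace ℝ X]
  [NormedAddCommGroup X₁] [NormedSpace ℝ X₁] {ι : X₁ →L[ℝ] X}

lemma isPositive_comp_inverse {A : X₁ →L[ℝ] X} {G : X →L[ℝ] X₁} (hAG : ∀ x, A (G x) = x)
    (hsymm : ∀ φ χ, ⟪A φ, ι χ⟫ = ⟪ι φ, A χ⟫) (hnonneg : ∀ φ, 0 ≤ ⟪A φ, ι φ⟫) :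
    (ι.comp G).IsPositive := by
  refine (ContinuousLinearMap.isPositive_iff _).2 ⟨fun x y => ?_, fun x => ?_⟩
  · change ⟪ι (G x), y⟫ = ⟪x, ι (G y)⟫
    simpa only [hAG] using (hsymm (G x) (G y)).symm
  · simpa only [hAG, real_inner_comm, ContinuousLinearMap.comp_apply] using hnonneg (G x)

lemma comp_inverse_le_smul_comp_inverse {A₀ A₁ : X₁ →L[ℝ] X} {G₀ G₁ : X →L[ℝ] X₁} {m : ℝ}
    (hm : 0 < m) (hGA₀ : ∀ φ, G₀ (A₀ φ) = φ) (hAG₁ : ∀ x, A₁ (G₁ x) = x)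
    (hG₀ : (ι.comp G₀).IsPositive) (hG₁ : (ι.comp G₁).IsPositive)
    (hle : ∀ φ, m * ⟪A₀ φ, ι φ⟫ ≤ ⟪A₁ φ, ι φ⟫) : ι.comp G₁ ≤ m⁻¹ • ι.comp G₀ := by
  have hform : ∀ x, m * ⟪ι (G₁ x), x⟫ ≤ ⟪ι (G₀ x), x⟫ := by
    intro x
    have hnonneg : 0 ≤ ⟪ι (G₀ x), x⟫ := hG₀.inner_nonneg_left x
    rcases (hG₁.inner_nonneg_left x).eq_or_lt with hzero | hpos
    · rw [ContinuousLinearMap.comp_apply] at hzero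
      rwa [← hzero, mul_zero]
    refine le_of_mul_le_mul_right ?_ hpos
    have hcs : ⟪ι (G₁ x), x⟫ ^ 2 ≤ ⟪ι (G₁ x), A₀ (G₁ x)⟫ * ⟪ι (G₀ x), x⟫ := by
      simpa [hGA₀] using inner_apply_sq_le_of_isPositive hG₀ (A₀ (G₁ x)) x
    have hcomp : m * ⟪ι (G₁ x), A₀ (G₁ x)⟫ ≤ ⟪ι (G₁ x), x⟫ := by
      simpa only [hAG₁, real_inner_comm] using hle (G₁ x)
    calc m * ⟪ι (G₁ x), x⟫ * ⟪ι (G₁ x), x⟫ = m * ⟪ι (G₁ x), x⟫ ^ 2 := by ring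
      _ ≤ m * (⟪ι (G₁ x), A₀ (G₁ x)⟫ * ⟪ι (G₀ x), x⟫) := by gcongr
      _ = m * ⟪ι (G₁ x), A₀ (G₁ x)⟫ * ⟪ι (G₀ x), x⟫ := by ring
      _ ≤ ⟪ι (G₁ x), x⟫ * ⟪ι (G₀ x), x⟫ := by gcongr
      _ = ⟪ι (G₀ x), x⟫ * ⟪ι (G₁ x), x⟫ := mul_comm _ _
  refine (ContinuousLinearMap.isPositive_iff _).2 ⟨?_, fun x => ?_⟩
  · exact ((hG₀.smul_of_nonneg (inv_nonneg.2 hm.le)).isSymmetric).sub hG₁.isSymmetric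
  · rw [sub_apply, smul_apply, inner_sub_left, inner_smul_left, RCLike.conj_to_real, sub_nonneg,
      le_inv_mul_iff₀ hm]
    exact hform x

end Inverses

/-- `T` is the contraction semigroup generated by `-R⁻¹`, where the resolvent `R` is positive and
injective. The derivative at time `0` is two-sided, so `T` has (unconstrained) values at negative
times. -/
structure IsPosContractionSemigroup {X : Type*} [NormedAddCommGroup X] [InnerProductSpace ℝ X]
    (T : ℝ → X →L[ℝ] X) (R : X →L[ℝ] X) : Prop where
  map_zero : T 0 = 1
  map_add : ∀ s t, 0 ≤ s → 0 ≤ t → T (s + t) = T s * T t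
  continuous_apply : ∀ x, Continuous fun t => T t x
  norm_le_one : ∀ t, 0 ≤ t → ‖T t‖ ≤ 1
  hasDerivAt : ∀ x t, 0 ≤ t → HasDerivAt (fun s => T s (R x)) (-(T t x)) t
  isPositive : R.IsPositive
  injective : Function.Injective R

namespace IsPosContractionSemigroup

section Resolvent

variable {X : Type*} [NormedAddCommGroup X] [InnerProductSpace ℝ X]
  {T S : ℝ → X →L[ℝ] X} {R Q : X →L[ℝ] X}

lemma norm_apply_le (hT : IsPosContractionSemigroup T R) {t : ℝ} (ht : 0 ≤ t) (x : X) :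
    ‖T t x‖ ≤ ‖x‖ := by
  simpa using (T t).le_of_opNorm_le (hT.norm_le_one t ht) x

lemma norm_sub_le_two (hT : IsPosContractionSemigroup T R) (hS : IsPosContractionSemigroup S Q)
    {s t : ℝ} (hs : 0 ≤ s) (ht : 0 ≤ t) : ‖T s - S t‖ ≤ 2 :=
  (norm_sub_le _ _).trans (by linarith [hT.norm_le_one s hs, hS.norm_le_one t ht])

lemma continuous_comp_apply {F : Type*} [NormedAddCommGroup F] [NormedSpace ℝ F]
    (hT : IsPosContractionSemigroup T R) (C : X →L[ℝ] F) (x : X) :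
    Continuous fun t => C.comp (T t) x :=
  C.continuous.comp (hT.continuous_apply x)

lemma norm_comp_le {F : Type*} [NormedAddCommGroup F] [NormedSpace ℝ F]
    (hT : IsPosContractionSemigroup T R) (C : X →L[ℝ] F) {t : ℝ} (ht : 0 ≤ t) :
    ‖C.comp (T t)‖ ≤ ‖C‖ :=
  (C.opNorm_comp_le (T t)).trans (mul_le_of_le_one_right (norm_nonneg _) (hT.norm_le_one t ht))

lemma commute (hT : IsPosContractionSemigroup T R) {s t : ℝ} (hs : 0 ≤ s) (ht : 0 ≤ t) :
    Commute (T s) (T t) := by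
  rw [commute_iff_eq, ← hT.map_add s t hs ht, ← hT.map_add t s ht hs, add_comm]

variable [CompleteSpace X]

lemma integral_apply (hT : IsPosContractionSemigroup T R) {t : ℝ} (ht : 0 ≤ t) (x : X) :
    ∫ s in (0 : ℝ)..t, T s x = R x - T t (R x) := by
  have hderiv : ∀ s ∈ Set.uIcc 0 t, HasDerivAt (fun s => -(T s (R x))) (T s x) s := by
    intro s hs
    rw [Set.uIcc_of_le ht] at hs
    simpa only [neg_neg] using (hT.hasDerivAt x s hs.1).fun_neg
  rw [intervalIntegral.integral_eq_sub_of_hasDerivAt hderiv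
    ((hT.continuous_apply x).intervalIntegrable _ _), hT.map_zero, one_apply_eq_self]
  abel

lemma norm_apply_sub_le (hT : IsPosContractionSemigroup T R) {t : ℝ} (ht : 0 ≤ t) (x : X) :
    ‖T t (R x) - R x‖ ≤ t * ‖x‖ := by
  rw [norm_sub_rev, ← hT.integral_apply ht x]
  simpa [abs_of_nonneg ht, mul_comm] using intervalIntegral.norm_integral_le_of_norm_le_const
    (a := 0) (b := t) (f := fun s => T s x) fun s hs => hT.norm_apply_le
      (Set.uIoc_of_le ht ▸ hs).1.le x

lemma eq_zero_of_fixed (hT : IsPosContractionSemigroup T R) {z : X}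
    (hz : ∀ t, 0 ≤ t → T t z = z) : z = 0 := by
  have hbound : ∀ t, 0 ≤ t → t * ‖z‖ ≤ 2 * ‖R z‖ := by
    intro t ht
    have hconst : ∫ s in (0 : ℝ)..t, T s z = t • z := by
      rw [intervalIntegral.integral_congr (g := fun _ => z) fun s hs =>
        hz s (Set.uIcc_of_le ht ▸ hs).1, intervalIntegral.integral_const, sub_zero]
    calc t * ‖z‖ = ‖R z - T t (R z)‖ := by
          rw [← hT.integral_apply ht, hconst, norm_smul, Real.norm_of_nonneg ht]
      _ ≤ ‖R z‖ + ‖T t (R z)‖ := norm_sub_le _ _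
      _ ≤ 2 * ‖R z‖ := by linarith [hT.norm_apply_le ht (R z)]
  by_contra hne
  have hz_pos : 0 < ‖z‖ := norm_pos_iff.2 hne
  have hlarge := hbound ((2 * ‖R z‖ + 1) / ‖z‖) (by positivity)
  rw [div_mul_cancel₀ _ hz_pos.ne'] at hlarge
  linarith

-- `R T_u x - T_u R x` is fixed by the semigroup, because `T_u` commutes with `∫ T_s x`.
lemma commute_resolvent (hT : IsPosContractionSemigroup T R) {u : ℝ} (hu : 0 ≤ u) :
    Commute (T u) R := by
  refine ContinuousLinearMap.ext fun x => (sub_eq_zero.1 (hT.eq_zero_of_fixed fun t ht => ?_)).symm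
  have hcomm : ∀ {s}, 0 ≤ s → ∀ y, T s (T u y) = T u (T s y) := fun hs y =>
    DFunLike.congr_fun (hT.commute hs hu).eq y
  have hintegral : ∫ s in (0 : ℝ)..t, T s (T u x) = T u (∫ s in (0 : ℝ)..t, T s x) := by
    rw [← (T u).intervalIntegral_comp_comm ((hT.continuous_apply x).intervalIntegrable _ _)]
    exact intervalIntegral.integral_congr fun s hs => hcomm (Set.uIcc_of_le ht ▸ hs).1 x
  rw [hT.integral_apply ht, hT.integral_apply ht, map_sub, ← hcomm ht,
    sub_eq_sub_iff_sub_eq_sub] at hintegral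
  simpa only [mul_apply_eq_comp, map_sub] using hintegral.symm

lemma resolvent_apply_comm (hT : IsPosContractionSemigroup T R) {u : ℝ} (hu : 0 ≤ u) (x : X) :
    T u (R x) = R (T u x) :=
  DFunLike.congr_fun (hT.commute_resolvent hu).eq x

lemma denseRange (hT : IsPosContractionSemigroup T R) : DenseRange R := by
  have hker : (LinearMap.range R.toLinearMap)ᗮ = ⊥ := by
    rw [LinearMap.IsSymmetric.orthogonal_range hT.isPositive.isSymmetric]
    exact LinearMap.ker_eq_bot.2 hT.injective
  exact Submodule.dense_iff_topologicalClosure_eq_top.2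
    ((Submodule.topologicalClosure_eq_top_iff).2 hker)

end Resolvent

section Duhamel

variable {X : Type*} [NormedAddCommGroup X] [InnerProductSpace ℝ X] [CompleteSpace X]
  {T S : ℝ → X →L[ℝ] X} {R Q : X →L[ℝ] X}

lemma hasDerivAt_inner_comp_sub (hT : IsPosContractionSemigroup T R)
    (hS : IsPosContractionSemigroup S Q) {s t : ℝ} (hs : 0 ≤ s) (hst : s ≤ t) (x y : X) :
    HasDerivAt (fun s => ⟪T s (R x), S (t - s) (Q y)⟫) ⟪T s x, (R - Q) (S (t - s) y)⟫ s := by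
  have hSderiv : HasDerivAt (fun s => S (t - s) (Q y)) (S (t - s) y) s := by
    simpa [Function.comp_def] using (hS.hasDerivAt y (t - s) (sub_nonneg.2 hst)).scomp s
      ((hasDerivAt_id s).const_sub t)
  refine ((hT.hasDerivAt x s hs).inner ℝ hSderiv).congr_deriv ?_
  rw [hT.resolvent_apply_comm hs, hS.resolvent_apply_comm (sub_nonneg.2 hst),
    show ⟪R (T s x), S (t - s) y⟫ = ⟪T s x, R (S (t - s) y)⟫ from hT.isPositive.isSymmetric _ _,
    inner_neg_left, sub_apply, inner_sub_right, ← sub_eq_add_neg]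

-- Duhamel's formula `T_t - S_t = ∫ d/ds (S_{t-s} T_s) ds`, tested between `R x` and `Q y`.
lemma abs_inner_sub_inner_le (hT : IsPosContractionSemigroup T R)
    (hS : IsPosContractionSemigroup S Q) {t : ℝ} (ht : 0 ≤ t) (x y : X) :
    |⟪T t (R x), Q y⟫ - ⟪R x, S t (Q y)⟫| ≤ t * ‖R - Q‖ * ‖x‖ * ‖y‖ := by
  have hderiv : ∀ s ∈ Set.Ico 0 t,
      ‖⟪T s x, (R - Q) (S (t - s) y)⟫‖ ≤ ‖R - Q‖ * ‖x‖ * ‖y‖ := fun s hs =>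
    calc ‖⟪T s x, (R - Q) (S (t - s) y)⟫‖ ≤ ‖T s x‖ * (‖R - Q‖ * ‖S (t - s) y‖) :=
          (norm_inner_le_norm _ _).trans (by gcongr; exact (R - Q).le_opNorm _)
      _ ≤ ‖x‖ * (‖R - Q‖ * ‖y‖) := by
          gcongr
          exacts [hT.norm_apply_le hs.1 x, hS.norm_apply_le (sub_nonneg.2 hs.2.le) y]
      _ = ‖R - Q‖ * ‖x‖ * ‖y‖ := by ring
  have hvariation := norm_image_sub_le_of_norm_deriv_le_segment'
    (fun s hs => (hT.hasDerivAt_inner_comp_sub hS hs.1 hs.2 x y).hasDerivWithinAt)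
    hderiv t (Set.right_mem_Icc.2 ht)
  simp only [sub_self, sub_zero, hT.map_zero, hS.map_zero, one_apply_eq_self,
    Real.norm_eq_abs] at hvariation
  linarith

lemma inner_apply_left (hT : IsPosContractionSemigroup T R) {t : ℝ} (ht : 0 ≤ t) (x y : X) :
    ⟪T t x, y⟫ = ⟪x, T t y⟫ := by
  refine hT.denseRange.induction_on₂ (isClosed_eq (by fun_prop) (by fun_prop)) (fun a b => ?_) x y
  simpa [sub_eq_zero] using hT.abs_inner_sub_inner_le hT ht a b

lemma isSelfAdjoint (hT : IsPosContractionSemigroup T R) {t : ℝ} (ht : 0 ≤ t) :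
    IsSelfAdjoint (T t) :=
  ContinuousLinearMap.isSelfAdjoint_iff_isSymmetric.2 (hT.inner_apply_left ht)

lemma norm_resolvent_mul_sub_mul_resolvent_le (hT : IsPosContractionSemigroup T R)
    (hS : IsPosContractionSemigroup S Q) {t : ℝ} (ht : 0 ≤ t) :
    ‖Q * (T t - S t) * R‖ ≤ t * ‖R - Q‖ := by
  refine ContinuousLinearMap.opNorm_le_of_re_inner_le (by positivity) fun x y hx hy => ?_
  have hQ : ∀ z, ⟪Q z, y⟫ = ⟪z, Q y⟫ := fun z => hS.isPositive.isSymmetric z y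
  simpa [hQ, inner_sub_left, hS.inner_apply_left ht, hx, hy] using
    (le_abs_self _).trans (hT.abs_inner_sub_inner_le hS ht x y)

end Duhamel

section Smoothing

variable {X : Type*} [NormedAddCommGroup X] [InnerProductSpace ℝ X] [CompleteSpace X]
  {T S : ℝ → X →L[ℝ] X} {R Q : X →L[ℝ] X}

lemma inner_apply_add (hT : IsPosContractionSemigroup T R) {s t : ℝ} (hs : 0 ≤ s) (ht : 0 ≤ t)
    (x y : X) : ⟪x, T (s + t) y⟫ = ⟪T s x, T t y⟫ := by
  rw [hT.map_add s t hs ht, mul_apply_eq_comp, hT.inner_apply_left hs]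

lemma inner_apply_self_anti (hT : IsPosContractionSemigroup T R) {s t : ℝ} (hs : 0 ≤ s)
    (hst : s ≤ t) (x : X) : ⟪x, T t x⟫ ≤ ⟪x, T s x⟫ := by
  have hsq : ∀ {u}, 0 ≤ u → ⟪x, T u x⟫ = ‖T (u / 2) x‖ ^ 2 := fun {u} hu => by
    rw [← real_inner_self_eq_norm_sq, ← hT.inner_apply_add (by linarith) (by linarith), add_halves]
  rw [hsq hs, hsq (hs.trans hst), show t / 2 = (t - s) / 2 + s / 2 by ring,
    hT.map_add _ _ (by linarith) (by linarith), mul_apply_eq_comp]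
  gcongr
  exact hT.norm_apply_le (by linarith) _

lemma mul_inner_apply_self_le (hT : IsPosContractionSemigroup T R) {t : ℝ} (ht : 0 ≤ t) (x : X) :
    t * ⟪x, T t x⟫ ≤ ⟪x, R x⟫ := by
  have hint : IntervalIntegrable (fun s => T s x) volume 0 t :=
    (hT.continuous_apply x).intervalIntegrable _ _
  have hnonneg : 0 ≤ ⟪x, T t (R x)⟫ := by
    rw [← add_halves t, hT.inner_apply_add (by linarith) (by linarith),
      hT.resolvent_apply_comm (by linarith)]
    exact hT.isPositive.inner_nonneg_right _
  calc t * ⟪x, T t x⟫ = ∫ _ in (0 : ℝ)..t, ⟪x, T t x⟫ := by simp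
    _ ≤ ∫ s in (0 : ℝ)..t, ⟪x, T s x⟫ :=
        intervalIntegral.integral_mono_on ht (by simp)
          ((continuous_const.inner (hT.continuous_apply x)).intervalIntegrable _ _)
          fun s hs => hT.inner_apply_self_anti hs.1 hs.2 x
    _ = ⟪x, R x - T t (R x)⟫ := by
        rw [← hT.integral_apply ht]
        exact (innerSL ℝ x).intervalIntegral_comp_comm hint
    _ ≤ ⟪x, R x⟫ := by rw [inner_sub_right]; linarith

-- The analyticity estimate `t ‖A T_t x‖ ≤ ‖x‖`, applied to `R x` and `A = R⁻¹`.
lemma mul_norm_apply_le (hT : IsPosContractionSemigroup T R) {t : ℝ} (ht : 0 ≤ t) (x : X) :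
    t * ‖T t x‖ ≤ ‖R x‖ := by
  have ht2 : 0 ≤ t / 2 := by linarith
  rcases (norm_nonneg (T t x)).eq_or_lt with hzero | hpos
  · rw [← hzero, mul_zero]
    exact norm_nonneg _
  refine le_of_mul_le_mul_right ?_ hpos
  calc t * ‖T t x‖ * ‖T t x‖ = t * ⟪T (t / 2) x, T t (T (t / 2) x)⟫ := by
        rw [← mul_apply_eq_comp, (hT.commute ht ht2).eq, mul_apply_eq_comp,
          ← hT.inner_apply_left ht2, ← mul_apply_eq_comp, ← hT.map_add _ _ ht2 ht2, add_halves,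
          real_inner_self_eq_norm_mul_norm, mul_assoc]
    _ ≤ ⟪T (t / 2) x, R (T (t / 2) x)⟫ := hT.mul_inner_apply_self_le ht _
    _ = ⟪T t x, R x⟫ := by
        rw [← hT.resolvent_apply_comm ht2, ← hT.inner_apply_add ht2 ht2, add_halves,
          hT.inner_apply_left ht]
    _ ≤ ‖R x‖ * ‖T t x‖ := (real_inner_le_norm _ _).trans_eq (mul_comm _ _)

lemma norm_mul_le_div (hT : IsPosContractionSemigroup T R) {t : ℝ} (ht : 0 < t) (W : X →L[ℝ] X) :
    ‖T t * W‖ ≤ ‖R * W‖ / t := by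
  refine ContinuousLinearMap.opNorm_le_bound _ (by positivity) fun x => ?_
  rw [div_mul_eq_mul_div, le_div_iff₀ ht, mul_comm]
  exact (hT.mul_norm_apply_le ht.le (W x)).trans ((R * W).le_opNorm x)

lemma norm_mul_right_le_div (hT : IsPosContractionSemigroup T R) {t : ℝ} (ht : 0 < t)
    (W : X →L[ℝ] X) : ‖W * T t‖ ≤ ‖W * R‖ / t := by
  rw [← norm_star (W * T t), ← norm_star (W * R), star_mul, star_mul,
    (hT.isSelfAdjoint ht.le).star_eq, hT.isPositive.isSelfAdjoint.star_eq]
  exact hT.norm_mul_le_div ht _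

end Smoothing

section Comparison

variable {X : Type*} [NormedAddCommGroup X] [InnerProductSpace ℝ X] [CompleteSpace X]
  {T S : ℝ → X →L[ℝ] X} {R Q : X →L[ℝ] X}

lemma norm_mul_sub_one_le (hT : IsPosContractionSemigroup T R) {u : ℝ} (hu : 0 ≤ u)
    (Q : X →L[ℝ] X) : ‖Q * (T u - 1)‖ ≤ 2 * ‖Q - R‖ + u := by
  have hQ : ‖(Q - R) * (T u - 1)‖ ≤ ‖Q - R‖ * 2 := by
    refine (norm_mul_le _ _).trans ?_
    gcongr
    exact hT.map_zero ▸ hT.norm_sub_le_two hT hu le_rfl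
  have hR : ‖R * (T u - 1)‖ ≤ u := by
    refine ContinuousLinearMap.opNorm_le_bound _ hu fun x => ?_
    simpa [hT.resolvent_apply_comm hu] using hT.norm_apply_sub_le hu x
  calc ‖Q * (T u - 1)‖ = ‖(Q - R) * (T u - 1) + R * (T u - 1)‖ := by rw [← add_mul, sub_add_cancel]
    _ ≤ 2 * ‖Q - R‖ + u := (norm_add_le _ _).trans (by linarith)

-- Each of the three terms of the decomposition is smoothed by a semigroup factor on either side.
lemma norm_add_sub_le (hT : IsPosContractionSemigroup T R) (hS : IsPosContractionSemigroup S Q)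
    {t u : ℝ} (ht : 0 ≤ t) (hu : 0 < u) :
    ‖T (t + u) - S (t + u)‖ ≤ t * ‖R - Q‖ / u / u + 2 * ((2 * ‖R - Q‖ + u) / (t + u)) := by
  have htu : 0 < t + u := by positivity
  have hmiddle : ‖S u * ((T t - S t) * T u)‖ ≤ t * ‖R - Q‖ / u / u := by
    refine (hS.norm_mul_le_div hu _).trans ?_
    gcongr
    rw [← mul_assoc]
    refine (hT.norm_mul_right_le_div hu _).trans ?_
    gcongr
    exact hT.norm_resolvent_mul_sub_mul_resolvent_le hS ht
  have hright : ‖S (t + u) * (T u - 1)‖ ≤ (2 * ‖R - Q‖ + u) / (t + u) := by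
    refine (hS.norm_mul_le_div htu _).trans ?_
    gcongr
    exact norm_sub_rev R Q ▸ hT.norm_mul_sub_one_le hu.le Q
  have hleft : ‖(S u - 1) * T (t + u)‖ ≤ (2 * ‖R - Q‖ + u) / (t + u) := by
    rw [← norm_star, star_mul, star_sub, star_one, (hS.isSelfAdjoint hu.le).star_eq,
      (hT.isSelfAdjoint htu.le).star_eq]
    refine (hT.norm_mul_le_div htu _).trans ?_
    gcongr
    exact hS.norm_mul_sub_one_le hu.le R
  have hdecomp : T (t + u) - S (t + u)
      = S u * ((T t - S t) * T u) + S (t + u) * (T u - 1) - (S u - 1) * T (t + u) := by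
    rw [add_comm t u, hT.map_add u t hu.le ht, hS.map_add u t hu.le ht,
      (hT.commute hu.le ht).eq]
    noncomm_ring
  rw [hdecomp]
  linarith [norm_sub_le (S u * ((T t - S t) * T u) + S (t + u) * (T u - 1))
    ((S u - 1) * T (t + u)), norm_add_le (S u * ((T t - S t) * T u)) (S (t + u) * (T u - 1))]

lemma tendstoUniformlyOn_Icc {α : Type*} {l : Filter α} {T : α → ℝ → X →L[ℝ] X}
    {R : α → X →L[ℝ] X} {T₀ : ℝ → X →L[ℝ] X} {R₀ : X →L[ℝ] X}
    (hT₀ : IsPosContractionSemigroup T₀ R₀)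
    (hT : ∀ i, IsPosContractionSemigroup (T i) (R i)) (hR : Tendsto R l (𝓝 R₀))
    {a b : ℝ} (ha : 0 < a) : TendstoUniformlyOn T T₀ l (Set.Icc a b) := by
  have hbound : ∀ u ∈ Set.Ioc 0 a, ∀ i, ∀ t ∈ Set.Icc a b, ‖T₀ t - T i t‖ ≤
      b * ‖R₀ - R i‖ / u / u + 2 * ((2 * ‖R₀ - R i‖ + u) / a) := by
    rintro u ⟨hu, hua⟩ i t ⟨hat, htb⟩
    have hcompare := hT₀.norm_add_sub_le (hT i) (sub_nonneg.2 (hua.trans hat)) hu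
    rw [sub_add_cancel] at hcompare
    refine hcompare.trans ?_
    gcongr
    linarith
  have hRsub : Tendsto (fun i => ‖R₀ - R i‖) l (𝓝 0) := by
    simpa using (tendsto_const_nhds (x := R₀)).sub hR |>.norm
  rw [Metric.tendstoUniformlyOn_iff]
  intro κ hκ
  obtain ⟨u, hu, hua, huκ⟩ : ∃ u, 0 < u ∧ u ≤ a ∧ 2 * (u / a) < κ :=
    ⟨min a (κ * a / 4), by positivity, min_le_left _ _, by
      have := min_le_right a (κ * a / 4)
      rw [← mul_div_assoc, div_lt_iff₀ ha]
      nlinarith⟩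
  have hlim : Tendsto (fun i => b * ‖R₀ - R i‖ / u / u + 2 * ((2 * ‖R₀ - R i‖ + u) / a)) l
      (𝓝 (2 * (u / a))) := by
    simpa using (((hRsub.const_mul b).div_const u).div_const u).add
      ((((hRsub.const_mul 2).add_const u).div_const a).const_mul 2)
  filter_upwards [hlim.eventually (gt_mem_nhds huκ)] with i hlt t ht
  rw [dist_eq_norm]
  exact (hbound u ⟨hu, hua⟩ i t ht).trans_lt hlt

end Comparison

end IsPosContractionSemigroup

section WellPosedMinimization

variable {E : Type*} [NormedAddCommGroup E]

/-- Tykhonov well-posedness of the minimization of `J`: the point `b` is a minimizer, and every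
minimizing filter (in particular every minimizing sequence) converges to `b`. -/
structure IsTykhonovWellPosed (J : E → ℝ) (b : E) : Prop where
  le : ∀ x, J b ≤ J x
  comap_le_nhds : comap J (𝓝 (J b)) ≤ 𝓝 b

variable [NormedSpace ℝ E]

/-- The point of the segment from `b` to `x` that is pulled back to the closed unit ball about `b`
when `x` lies outside it, and equals `x` otherwise. -/
noncomputable def radialTruncation (b x : E) : E := b + (max 1 ‖x - b‖)⁻¹ • (x - b)

lemma norm_radialTruncation_sub (b x : E) :
    ‖radialTruncation b x - b‖ = ‖x - b‖ / max 1 ‖x - b‖ := by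
  rw [radialTruncation, add_sub_cancel_left, norm_smul, norm_inv,
    Real.norm_of_nonneg (by positivity), inv_mul_eq_div]

lemma radialTruncation_mem_closedBall (b x : E) :
    radialTruncation b x ∈ Metric.closedBall b 1 := by
  rw [mem_closedBall_iff_norm, norm_radialTruncation_sub]
  exact div_le_one_of_le₀ (le_max_right _ _) (by positivity)

lemma radialTruncation_eq_self {b x : E} (h : radialTruncation b x ∈ Metric.ball b 1) :
    radialTruncation b x = x := by
  rw [mem_ball_iff_norm, norm_radialTruncation_sub, div_lt_one (by positivity)] at h
  have hx : ‖x - b‖ ≤ 1 := (lt_max_iff.1 h).elim le_of_lt fun h => absurd h (lt_irrefl _)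
  rw [radialTruncation, max_eq_left hx, inv_one, one_smul, add_sub_cancel]

lemma apply_radialTruncation_le {J : E → ℝ} (hJ : ConvexOn ℝ Set.univ J) {b x : E}
    (hxb : J x ≤ J b) : J (radialTruncation b x) ≤ J b := by
  have hs : (max 1 ‖x - b‖)⁻¹ ∈ Set.Icc (0 : ℝ) 1 :=
    ⟨by positivity, inv_le_one_of_one_le₀ (le_max_left _ _)⟩
  have hmem : radialTruncation b x ∈ segment ℝ b x := by
    rw [segment_eq_image']
    exact ⟨_, hs, rfl⟩
  exact (hJ.le_on_segment (Set.mem_univ _) (Set.mem_univ _) hmem).trans (max_le le_rfl hxb)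

-- Only points near `b` are controlled, so the minimizers are first truncated; by convexity the
-- truncations are still almost minimizing, hence converge to `b`, hence are eventually untruncated.
theorem IsTykhonovWellPosed.tendsto_minimizers {α : Type*} {l : Filter α} {J : α → E → ℝ}
    {J₀ : E → ℝ} {b : E} {η : α → E} (hwell : IsTykhonovWellPosed J₀ b)
    (hconv : ∀ i, ConvexOn ℝ Set.univ (J i))
    (hunif : TendstoUniformlyOn J J₀ l (Metric.closedBall b 1)) (hη : ∀ i x, J i (η i) ≤ J i x) :
    Tendsto η l (𝓝 b) ∧ Tendsto (fun i => J i (η i)) l (𝓝 (J₀ b)) := by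
  set y : α → E := fun i => radialTruncation b (η i)
  have hdiff : ∀ z : α → E, (∀ i, z i ∈ Metric.closedBall b 1) →
      Tendsto (fun i => J i (z i) - J₀ (z i)) l (𝓝 0) := by
    intro z hz
    rw [Metric.tendsto_nhds]
    intro κ hκ
    filter_upwards [Metric.tendstoUniformlyOn_iff.1 hunif κ hκ] with i hi
    simpa [Real.dist_eq, abs_sub_comm] using hi (z i) (hz i)
  have hdiff_y := hdiff y fun i => radialTruncation_mem_closedBall b (η i)
  have hJ₀y : Tendsto (fun i => J₀ (y i)) l (𝓝 (J₀ b)) := by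
    have hupper : Tendsto (fun i => J₀ b + (J i b - J₀ b) - (J i (y i) - J₀ (y i))) l
        (𝓝 (J₀ b)) := by
      simpa using ((hdiff (fun _ => b) fun _ => by simp).const_add (J₀ b)).sub hdiff_y
    refine tendsto_of_tendsto_of_tendsto_of_le_of_le tendsto_const_nhds hupper
      (fun i => hwell.le (y i)) fun i => ?_
    linarith [apply_radialTruncation_le (hconv i) (hη i b)]
  have hy_tendsto : Tendsto y l (𝓝 b) :=
    (tendsto_comap_iff.2 hJ₀y).mono_right hwell.comap_le_nhds
  have hy_eq : y =ᶠ[l] η := by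
    filter_upwards [hy_tendsto.eventually (Metric.ball_mem_nhds b one_pos)] with i hi
    exact radialTruncation_eq_self hi
  refine ⟨hy_tendsto.congr' hy_eq, ?_⟩
  have hvalues : Tendsto (fun i => J i (y i)) l (𝓝 (J₀ b)) := by
    simpa using hdiff_y.add hJ₀y
  exact hvalues.congr' (hy_eq.mono fun i hi => congrArg (J i) hi)

end WellPosedMinimization

section SeminormFunctional

/-- The functional `x ↦ ½ N(x)² + ⟨p, x⟩ + r‖x‖`, of which `Jeps` is the instance where `N` is the
`L¹`-norm of the observation. -/
noncomputable def seminormFunctional {E : Type*} [NormedAddCommGroup E] [NormedSpace ℝ E]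
    (N : Seminorm ℝ E) (p : StrongDual ℝ E) (r : ℝ) (x : E) : ℝ :=
  (1 / 2) * N x ^ 2 + p x + r * ‖x‖

section NormedSpace

variable {E : Type*} [NormedAddCommGroup E] [NormedSpace ℝ E] {N : Seminorm ℝ E}
  {p : StrongDual ℝ E} {r : ℝ}

lemma seminormFunctional_zero (N : Seminorm ℝ E) (p : StrongDual ℝ E) (r : ℝ) :
    seminormFunctional N p r 0 = 0 := by
  simp [seminormFunctional]

lemma convexOn_seminormFunctional (N : Seminorm ℝ E) (p : StrongDual ℝ E) (hr : 0 ≤ r) :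
    ConvexOn ℝ Set.univ (seminormFunctional N p r) :=
  (((N.convexOn.pow (fun _ _ => apply_nonneg N _) 2).smul one_half_pos.le).add
    (p.toLinearMap.convexOn convex_univ)).add (convexOn_univ_norm.smul hr)

lemma tendstoUniformlyOn_seminorm_sq {α : Type*} {l : Filter α} {N : α → Seminorm ℝ E}
    {N₀ : Seminorm ℝ E} {s : Set E} (hs : Bornology.IsBounded s) (hN₀ : Continuous N₀)
    (hN : TendstoUniformlyOn (fun i => N i) N₀ l s) :
    TendstoUniformlyOn (fun i x => (1 / 2) * N i x ^ 2) (fun x => (1 / 2) * N₀ x ^ 2) l s := by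
  obtain ⟨M, hM0, hM⟩ := Seminorm.bound_of_continuous_normedSpace N₀ hN₀
  obtain ⟨ρ, hρ⟩ := hs.exists_norm_le
  have hN₀s : ∀ x ∈ s, N₀ x ≤ M * ρ := fun x hx => (hM x).trans (by gcongr; exact hρ x hx)
  have hNs : ∀ᶠ i in l, ∀ x ∈ s, N i x ∈ Set.Icc 0 (M * ρ + 1) := by
    filter_upwards [Metric.tendstoUniformlyOn_iff.1 hN 1 one_pos] with i hi x hx
    have hclose := abs_lt.1 (hi x hx)
    exact ⟨apply_nonneg _ _, by linarith [hclose.1, hN₀s x hx]⟩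
  exact (isCompact_Icc.uniformContinuousOn_of_continuous (by fun_prop :
    ContinuousOn (fun y : ℝ => (1 / 2) * y ^ 2) (Set.Icc 0 (M * ρ + 1)))
    ).comp_tendstoUniformlyOn_eventually hNs
      (fun x hx => ⟨apply_nonneg _ _, (hN₀s x hx).trans (by linarith)⟩) hN

lemma tendstoUniformlyOn_seminormFunctional {α : Type*} {l : Filter α} {N : α → Seminorm ℝ E}
    {N₀ : Seminorm ℝ E} {p : α → StrongDual ℝ E} {p₀ : StrongDual ℝ E} {s : Set E}
    (hs : Bornology.IsBounded s) (hN₀ : Continuous N₀)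
    (hN : TendstoUniformlyOn (fun i => N i) N₀ l s) (hp : Tendsto p l (𝓝 p₀)) :
    TendstoUniformlyOn (fun i => seminormFunctional (N i) (p i) r) (seminormFunctional N₀ p₀ r)
      l s := by
  obtain ⟨ρ, hρ⟩ := hs.exists_norm_le
  have hpairing : TendstoUniformlyOn (fun i => p i) p₀ l s := by
    rw [Metric.tendstoUniformlyOn_iff]
    intro κ hκ
    have hlim : Tendsto (fun i => ‖p₀ - p i‖ * ρ) l (𝓝 0) := by
      simpa using (hp.const_sub p₀).norm.mul_const ρ
    filter_upwards [hlim.eventually (gt_mem_nhds hκ)] with i hi x hx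
    rw [dist_eq_norm, ← sub_apply]
    exact ((p₀ - p i).le_opNorm_of_le (hρ x hx)).trans_lt hi
  have hnorm : TendstoUniformlyOn (fun (_ : α) (x : E) => r * ‖x‖) (fun x => r * ‖x‖) l s :=
    fun _ hu => Eventually.of_forall fun _ _ _ => refl_mem_uniformity hu
  exact ((tendstoUniformlyOn_seminorm_sq hs hN₀ hN).add hpairing).add hnorm

-- Compare `J b` with the value of `J` at the midpoint of `a` and `b`.
lemma gap_le_seminormFunctional_sub {b : E}
    (hb : ∀ x, seminormFunctional N p r b ≤ seminormFunctional N p r x) (a : E) :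
    (N a - N b) ^ 2 / 4 + r * (‖a‖ + ‖b‖ - ‖a + b‖) ≤
      seminormFunctional N p r a - seminormFunctional N p r b := by
  have hmid := hb ((1 / 2 : ℝ) • (a + b))
  have hN : N (a + b) ^ 2 ≤ (N a + N b) ^ 2 :=
    pow_le_pow_left₀ (apply_nonneg _ _) (map_add_le_add _ _ _) 2
  simp only [seminormFunctional, map_smul_eq_mul, map_smul, map_add, norm_smul, smul_eq_mul,
    Real.norm_of_nonneg one_half_pos.le] at hmid ⊢
  nlinarith

lemma tendsto_seminorm_of_tendsto_seminormFunctional {F : Filter E} {b : E} (hr : 0 ≤ r)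
    (hb : ∀ x, seminormFunctional N p r b ≤ seminormFunctional N p r x)
    (hF : Tendsto (seminormFunctional N p r) F (𝓝 (seminormFunctional N p r b))) :
    Tendsto N F (𝓝 (N b)) := by
  rw [tendsto_iff_norm_sub_tendsto_zero]
  have hsqrt : Tendsto (fun x => √(4 * (seminormFunctional N p r x - seminormFunctional N p r b)))
      F (𝓝 0) := by
    simpa using ((hF.sub_const (seminormFunctional N p r b)).const_mul 4).sqrt
  refine squeeze_zero (fun _ => norm_nonneg _) (fun x => Real.abs_le_sqrt ?_) hsqrt
  have hnonneg : 0 ≤ r * (‖x‖ + ‖b‖ - ‖x + b‖) :=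
    mul_nonneg hr (sub_nonneg.2 (norm_add_le x b))
  linarith [gap_le_seminormFunctional_sub hb x]

lemma tendsto_norm_add_norm_sub_of_tendsto_seminormFunctional {F : Filter E} {b : E} (hr : 0 < r)
    (hb : ∀ x, seminormFunctional N p r b ≤ seminormFunctional N p r x)
    (hF : Tendsto (seminormFunctional N p r) F (𝓝 (seminormFunctional N p r b))) :
    Tendsto (fun x => ‖x‖ + ‖b‖ - ‖x + b‖) F (𝓝 0) := by
  have hlim : Tendsto (fun x => (seminormFunctional N p r x - seminormFunctional N p r b) / r)
      F (𝓝 0) := by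
    simpa using (hF.sub_const (seminormFunctional N p r b)).div_const r
  refine squeeze_zero (fun x => sub_nonneg.2 (norm_add_le x b)) (fun x => ?_) hlim
  rw [le_div_iff₀' hr]
  linarith [gap_le_seminormFunctional_sub hb x, sq_nonneg (N x - N b)]

lemma mul_norm_le_seminormFunctional_add {K : ℝ} (hp : ∀ x, |p x| ≤ K * N x) (x : E) :
    r * ‖x‖ ≤ seminormFunctional N p r x + K * N x := by
  have hpx := (abs_le.1 (hp x)).1
  have hsq : 0 ≤ (1 / 2) * N x ^ 2 := by positivity
  rw [seminormFunctional]
  linarith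

lemma eventually_norm_le_of_tendsto_seminormFunctional {F : Filter E} {b : E} {K : ℝ} (hr : 0 < r)
    (hp : ∀ x, |p x| ≤ K * N x) (hN : Tendsto N F (𝓝 (N b)))
    (hF : Tendsto (seminormFunctional N p r) F (𝓝 (seminormFunctional N p r b))) :
    ∃ ρ, ∀ᶠ x in F, ‖x‖ ≤ ρ := by
  refine ⟨(seminormFunctional N p r b + K * N b + 1) / r, ?_⟩
  filter_upwards [(hF.add (hN.const_mul K)).eventually (gt_mem_nhds (lt_add_one _))] with x hx
  rw [le_div_iff₀' hr]
  exact (mul_norm_le_seminormFunctional_add hp x).trans hx.le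

lemma seminorm_pos_of_minimizer {b : E} {K : ℝ} (hr : 0 < r) (hp : ∀ x, |p x| ≤ K * N x)
    (hb : ∀ x, seminormFunctional N p r b ≤ seminormFunctional N p r x) (hb0 : b ≠ 0) :
    0 < N b := by
  refine (apply_nonneg N b).lt_of_ne fun hzero => ?_
  have hJb : seminormFunctional N p r b ≤ 0 := seminormFunctional_zero N p r ▸ hb 0
  have hnorm := mul_norm_le_seminormFunctional_add (r := r) hp b
  rw [← hzero, mul_zero, add_zero] at hnorm
  exact (mul_pos hr (norm_pos_iff.2 hb0)).not_ge (hnorm.trans hJb)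

end NormedSpace

section InnerProductSpace

variable {X : Type*} [NormedAddCommGroup X] [InnerProductSpace ℝ X]

lemma norm_sub_div_smul_sq (a : X) {b : X} (hb : b ≠ 0) :
    ‖a - (‖a‖ / ‖b‖) • b‖ ^ 2 =
      ‖a‖ / ‖b‖ * ((‖a‖ + ‖b‖ - ‖a + b‖) * (‖a‖ + ‖b‖ + ‖a + b‖)) := by
  have hb' : ‖b‖ ≠ 0 := norm_ne_zero_iff.2 hb
  have hsum : (‖a‖ + ‖b‖ - ‖a + b‖) * (‖a‖ + ‖b‖ + ‖a + b‖) = 2 * (‖a‖ * ‖b‖ - ⟪a, b⟫) := by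
    linarith [norm_add_sq_real a b]
  rw [hsum, norm_sub_sq_real, norm_smul, real_inner_smul_right,
    Real.norm_of_nonneg (by positivity)]
  field_simp
  ring

-- Near-equality in the triangle inequality forces near-alignment.
lemma tendsto_sub_div_smul_of_tendsto_norm_add {F : Filter X} {b : X} {ρ : ℝ} (hb : b ≠ 0)
    (hρ : ∀ᶠ x in F, ‖x‖ ≤ ρ) (hF : Tendsto (fun x => ‖x‖ + ‖b‖ - ‖x + b‖) F (𝓝 0)) :
    Tendsto (fun x => x - (‖x‖ / ‖b‖) • b) F (𝓝 0) := by
  have hsqrt : Tendsto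
      (fun x => √(ρ / ‖b‖ * ((‖x‖ + ‖b‖ - ‖x + b‖) * (2 * (ρ + ‖b‖))))) F (𝓝 0) := by
    simpa using ((hF.mul_const (2 * (ρ + ‖b‖))).const_mul (ρ / ‖b‖)).sqrt
  refine squeeze_zero_norm' ?_ hsqrt
  filter_upwards [hρ] with x hx
  have hdefect : 0 ≤ ‖x‖ + ‖b‖ - ‖x + b‖ := sub_nonneg.2 (norm_add_le x b)
  have hsum : ‖x‖ + ‖b‖ + ‖x + b‖ ≤ 2 * (ρ + ‖b‖) := by linarith
  have hρ0 : 0 ≤ ρ := (norm_nonneg x).trans hx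
  refine Real.le_sqrt_of_sq_le ?_
  rw [norm_sub_div_smul_sq x hb]
  gcongr

lemma tendsto_of_tendsto_sub_div_smul {F : Filter X} {b : X} {N : Seminorm ℝ X}
    (hN : Continuous N) (hNb : 0 < N b) (hNF : Tendsto N F (𝓝 (N b)))
    (hF : Tendsto (fun x => x - (‖x‖ / ‖b‖) • b) F (𝓝 0)) : Tendsto (fun x => x) F (𝓝 b) := by
  have hdiff : Tendsto (fun x => N x - ‖x‖ / ‖b‖ * N b) F (𝓝 0) := by
    refine squeeze_zero_norm (fun x => ?_) (by simpa using (hN.tendsto 0).comp hF)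
    simpa [map_smul_eq_mul] using N.norm_sub_map_le_sub x ((‖x‖ / ‖b‖) • b)
  have hratio : Tendsto (fun x => ‖x‖ / ‖b‖) F (𝓝 1) := by
    have hquot := (hNF.sub hdiff).div_const (N b)
    simpa [hNb.ne'] using hquot
  simpa using hF.add (hratio.smul_const b)

theorem isTykhonovWellPosed_seminormFunctional {N : Seminorm ℝ X} {p : StrongDual ℝ X} {r K : ℝ}
    {b : X} (hN : Continuous N) (hr : 0 < r) (hp : ∀ x, |p x| ≤ K * N x)
    (hb : ∀ x, seminormFunctional N p r b ≤ seminormFunctional N p r x) :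
    IsTykhonovWellPosed (seminormFunctional N p r) b := by
  refine ⟨hb, ?_⟩
  set F := comap (seminormFunctional N p r) (𝓝 (seminormFunctional N p r b))
  have hF : Tendsto (seminormFunctional N p r) F (𝓝 (seminormFunctional N p r b)) :=
    tendsto_comap
  have hNF := tendsto_seminorm_of_tendsto_seminormFunctional hr.le hb hF
  rcases eq_or_ne b 0 with rfl | hb0
  · have hlim : Tendsto (fun x => (seminormFunctional N p r x + K * N x) / r) F (𝓝 0) := by
      simpa [seminormFunctional_zero] using (hF.add (hNF.const_mul K)).div_const r
    refine squeeze_zero_norm (fun x => ?_) hlim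
    rw [le_div_iff₀' hr]
    exact mul_norm_le_seminormFunctional_add hp x
  · obtain ⟨ρ, hρ⟩ := eventually_norm_le_of_tendsto_seminormFunctional hr hp hNF hF
    exact tendsto_of_tendsto_sub_div_smul hN (seminorm_pos_of_minimizer hr hp hb hb0) hNF
      (tendsto_sub_div_smul_of_tendsto_norm_add hb0 hρ
        (tendsto_norm_add_norm_sub_of_tendsto_seminormFunctional hr hb hF))

end InnerProductSpace

end SeminormFunctional

section Observation

variable {E F : Type*} [NormedAddCommGroup E] [NormedSpace ℝ E] [NormedAddCommGroup F]
  [NormedSpace ℝ F] {L M : ℝ → E →L[ℝ] F}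

/-- The `L¹`-norm over the time interval `(0, τ]` of the trajectory `t ↦ L t x`, as a seminorm in
the initial state `x`. Time is reversed as in `Jeps`. -/
noncomputable def observationSeminorm (L : ℝ → E →L[ℝ] F) (hL : ∀ x, Continuous fun t => L t x)
    (τ : ℝ) : Seminorm ℝ E :=
  Seminorm.of (fun x => ∫ t in Set.Ioc 0 τ, ‖L (τ - t) x‖)
    (fun x y => by
      have hint : ∀ x, IntegrableOn (fun t => ‖L (τ - t) x‖) (Set.Ioc 0 τ) := fun x =>
        ((hL x).comp (continuous_const.sub continuous_id)).norm.integrableOn_Ioc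
      rw [← integral_add (hint x) (hint y)]
      refine integral_mono (hint _) ((hint x).add (hint y)) fun t => ?_
      simpa only [map_add] using norm_add_le _ _)
    (fun a x => by simp only [map_smul, norm_smul, integral_const_mul])

lemma observationSeminorm_apply (hL : ∀ x, Continuous fun t => L t x) {τ : ℝ} (hτ : 0 ≤ τ)
    (x : E) : observationSeminorm L hL τ x = ∫ t in (0 : ℝ)..τ, ‖L t x‖ := by
  change ∫ t in Set.Ioc 0 τ, ‖L (τ - t) x‖ = _
  rw [← intervalIntegral.integral_of_le hτ,
    intervalIntegral.integral_comp_sub_left (fun t => ‖L t x‖), sub_self, sub_zero]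

lemma abs_integral_norm_apply_le {β : ℝ} (hβ : ∀ t, 0 ≤ t → ‖L t‖ ≤ β) {a b : ℝ} (ha : 0 ≤ a)
    (hb : 0 ≤ b) (x : E) : |∫ t in a..b, ‖L t x‖| ≤ β * ‖x‖ * |b - a| := by
  rw [← Real.norm_eq_abs]
  refine intervalIntegral.norm_integral_le_of_norm_le_const fun t ht => ?_
  rw [norm_norm]
  exact (L t).le_of_opNorm_le (hβ t ((le_min ha hb).trans ht.1.le)) x

lemma abs_integral_norm_apply_sub_le (hL : ∀ x, Continuous fun t => L t x)
    (hM : ∀ x, Continuous fun t => M t x) {a b κ : ℝ} (hab : a ≤ b)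
    (hκ : ∀ t ∈ Set.Icc a b, ‖L t - M t‖ ≤ κ) (x : E) :
    |(∫ t in a..b, ‖L t x‖) - ∫ t in a..b, ‖M t x‖| ≤ κ * ‖x‖ * (b - a) := by
  rw [← intervalIntegral.integral_sub ((hL x).norm.intervalIntegrable _ _)
    ((hM x).norm.intervalIntegrable _ _), ← abs_of_nonneg (sub_nonneg.2 hab), ← Real.norm_eq_abs]
  refine intervalIntegral.norm_integral_le_of_norm_le_const fun t ht => ?_
  rw [Set.uIoc_of_le hab] at ht
  exact (abs_norm_sub_norm_le _ _).trans
    ((L t - M t).le_of_opNorm_le (hκ t (Set.Ioc_subset_Icc_self ht)) x)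

-- The operators are close only away from time `0`; on the initial layer `[0, a]` only `β` helps.
lemma abs_observationSeminorm_sub_le (hL : ∀ x, Continuous fun t => L t x)
    (hM : ∀ x, Continuous fun t => M t x) {β : ℝ} (hLβ : ∀ t, 0 ≤ t → ‖L t‖ ≤ β)
    (hMβ : ∀ t, 0 ≤ t → ‖M t‖ ≤ β) {a κ σ τ : ℝ} (ha : 0 ≤ a) (haσ : a ≤ σ) (hτ : 0 ≤ τ)
    (hκ : ∀ t ∈ Set.Icc a σ, ‖L t - M t‖ ≤ κ) (x : E) :
    |observationSeminorm L hL σ x - observationSeminorm M hM τ x| ≤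
      (2 * β * a + κ * (σ - a) + β * |τ - σ|) * ‖x‖ := by
  have hintL : ∀ a b, IntervalIntegrable (fun t => ‖L t x‖) volume a b :=
    fun a b => (hL x).norm.intervalIntegrable a b
  have hintM : ∀ a b, IntervalIntegrable (fun t => ‖M t x‖) volume a b :=
    fun a b => (hM x).norm.intervalIntegrable a b
  have hlayer := abs_integral_norm_apply_sub_le hL hM ha (fun t ht =>
    (norm_sub_le _ _).trans (add_le_add (hLβ t ht.1) (hMβ t ht.1))) x
  have hbulk := abs_integral_norm_apply_sub_le hL hM haσ hκ x
  have htail := abs_integral_norm_apply_le hMβ (ha.trans haσ) hτ x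
  rw [observationSeminorm_apply hL (ha.trans haσ), observationSeminorm_apply hM hτ,
    ← intervalIntegral.integral_add_adjacent_intervals (hintM 0 σ) (hintM σ τ),
    ← intervalIntegral.integral_add_adjacent_intervals (hintL 0 a) (hintL a σ),
    ← intervalIntegral.integral_add_adjacent_intervals (hintM 0 a) (hintM a σ)]
  rw [abs_le] at *
  constructor <;> linarith

lemma continuous_observationSeminorm (hL : ∀ x, Continuous fun t => L t x) {β : ℝ}
    (hβ : ∀ t, 0 ≤ t → ‖L t‖ ≤ β) {τ : ℝ} (hτ : 0 ≤ τ) :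
    Continuous (observationSeminorm L hL τ) := by
  refine Seminorm.continuous_of_continuousAt_zero ?_
  have hlim : Tendsto (fun x : E => β * ‖x‖ * |τ - 0|) (𝓝 0) (𝓝 0) := by
    simpa using (tendsto_norm_zero.const_mul β).mul_const |τ - 0|
  rw [ContinuousAt, map_zero]
  refine squeeze_zero (fun x => apply_nonneg _ x) (fun x => ?_) hlim
  rw [observationSeminorm_apply hL hτ]
  exact (le_abs_self _).trans (abs_integral_norm_apply_le hβ le_rfl hτ x)

lemma tendstoUniformlyOn_observationSeminorm {α : Type*} {l : Filter α} {L : α → ℝ → E →L[ℝ] F}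
    {L₀ : ℝ → E →L[ℝ] F} (hL : ∀ i x, Continuous fun t => L i t x)
    (hL₀ : ∀ x, Continuous fun t => L₀ t x) {β : ℝ} (hβ : ∀ i t, 0 ≤ t → ‖L i t‖ ≤ β)
    (hβ₀ : ∀ t, 0 ≤ t → ‖L₀ t‖ ≤ β) {τ : α → ℝ} {τ₀ : ℝ} (hτ₀ : 0 < τ₀) (hτ : Tendsto τ l (𝓝 τ₀))
    (hlim : ∀ a, 0 < a → TendstoUniformlyOn L L₀ l (Set.Icc a τ₀)) {s : Set E}
    (hs : Bornology.IsBounded s) :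
    TendstoUniformlyOn (fun i => observationSeminorm (L i) (hL i) (τ i))
      (observationSeminorm L₀ hL₀ τ₀) l s := by
  have hβ0 : 0 ≤ β := (norm_nonneg _).trans (hβ₀ 0 le_rfl)
  obtain ⟨ρ, hρ⟩ := hs.exists_norm_le
  have herror : Tendsto (fun a => (2 * β * a + a * τ₀ + β * a) * ρ) (𝓝[>] 0) (𝓝 0) := by
    have hcont : Continuous fun a : ℝ => (2 * β * a + a * τ₀ + β * a) * ρ := by fun_prop
    simpa using (hcont.tendsto 0).mono_left nhdsWithin_le_nhds
  rw [Metric.tendstoUniformlyOn_iff]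
  intro κ hκ
  obtain ⟨a, haκ, ha : 0 < a, haτ⟩ := ((herror.eventually (gt_mem_nhds hκ)).and
    (Ioo_mem_nhdsGT hτ₀)).exists
  filter_upwards [Metric.tendstoUniformlyOn_iff.1 (hlim a ha) a ha, Metric.tendsto_nhds.1 hτ a ha,
    hτ.eventually (lt_mem_nhds hτ₀)] with i hi hia hi0 x hx
  refine ((abs_observationSeminorm_sub_le hL₀ (hL i) hβ₀ (hβ i) ha.le haτ.le hi0.le
    (fun t ht => (dist_eq_norm (L₀ t) (L i t) ▸ (hi t ht).le)) x).trans ?_).trans_lt haκ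
  rw [Real.dist_eq] at hia
  gcongr
  exacts [by linarith, hρ x hx]

end Observation

section MinimizerConvergence

variable {X : Type*} [NormedAddCommGroup X] [InnerProductSpace ℝ X] [CompleteSpace X]

namespace IsPosContractionSemigroup

variable {α : Type*} {l : Filter α} {T : α → ℝ → X →L[ℝ] X} {R : α → X →L[ℝ] X}
  {T₀ : ℝ → X →L[ℝ] X} {R₀ : X →L[ℝ] X}

lemma tendsto_apply (hT₀ : IsPosContractionSemigroup T₀ R₀)
    (hT : ∀ i, IsPosContractionSemigroup (T i) (R i)) (hR : Tendsto R l (𝓝 R₀)) {τ : α → ℝ}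
    {τ₀ : ℝ} (hτ₀ : 0 < τ₀) (hτ : Tendsto τ l (𝓝 τ₀)) (x : X) :
    Tendsto (fun i => T i (τ i) x) l (𝓝 (T₀ τ₀ x)) := by
  have hnhds : Set.Icc (τ₀ / 2) (τ₀ + 1) ∈ 𝓝 τ₀ := Icc_mem_nhds (by linarith) (by linarith)
  have hunif : TendstoUniformlyOn (fun i t => T i t x) (fun t => T₀ t x) l
      (Set.Icc (τ₀ / 2) (τ₀ + 1)) :=
    (ContinuousLinearMap.apply ℝ X x).uniformContinuous.comp_tendstoUniformlyOn
      (hT₀.tendstoUniformlyOn_Icc hT hR (half_pos hτ₀))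
  refine hunif.tendsto_comp (hT₀.continuous_apply x).continuousWithinAt ?_
  rwa [nhdsWithin_eq_nhds.2 hnhds]

lemma tendsto_innerSL_comp (hT₀ : IsPosContractionSemigroup T₀ R₀)
    (hT : ∀ i, IsPosContractionSemigroup (T i) (R i)) (hR : Tendsto R l (𝓝 R₀)) {τ : α → ℝ}
    {τ₀ : ℝ} (hτ₀ : 0 < τ₀) (hτ : Tendsto τ l (𝓝 τ₀)) (ψ : X) :
    Tendsto (fun i => (innerSL ℝ ψ).comp (T i (τ i))) l (𝓝 ((innerSL ℝ ψ).comp (T₀ τ₀))) := by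
  have hsymm : ∀ {S : ℝ → X →L[ℝ] X} {Q : X →L[ℝ] X}, IsPosContractionSemigroup S Q → ∀ {t},
      0 ≤ t → innerSL ℝ (S t ψ) = (innerSL ℝ ψ).comp (S t) := fun hS _ ht =>
    ContinuousLinearMap.ext (hS.inner_apply_left ht ψ)
  rw [← hsymm hT₀ hτ₀.le]
  refine (((innerSL ℝ).continuous.tendsto _).comp (hT₀.tendsto_apply hT hR hτ₀ hτ ψ)).congr' ?_
  filter_upwards [hτ.eventually (lt_mem_nhds hτ₀)] with i hi
  exact hsymm (hT i) hi.le

end IsPosContractionSemigroup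

variable {U : Type*} [NormedAddCommGroup U] [InnerProductSpace ℝ U] [CompleteSpace U]

section SingleSemigroup

variable {T : ℝ → X →L[ℝ] X} {R : X →L[ℝ] X}

lemma Jeps_eq_seminormFunctional (hT : IsPosContractionSemigroup T R) (B : U →L[ℝ] X) (r : ℝ)
    (ψ : X) (τ : ℝ) :
    Jeps T B r ψ τ = seminormFunctional
      (observationSeminorm (fun t => B.adjoint.comp (T t)) (hT.continuous_comp_apply _) τ)
      ((innerSL ℝ ψ).comp (T τ)) r :=
  rfl

lemma convexOn_Jeps (hT : IsPosContractionSemigroup T R) (B : U →L[ℝ] X) {r : ℝ} (hr : 0 ≤ r)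
    (ψ : X) (τ : ℝ) : ConvexOn ℝ Set.univ (Jeps T B r ψ τ) := by
  rw [Jeps_eq_seminormFunctional hT]
  exact convexOn_seminormFunctional _ _ hr

lemma isTykhonovWellPosed_Jeps (hT : IsPosContractionSemigroup T R) {B : U →L[ℝ] X} {r τ K : ℝ}
    {ψ η : X} (hτ : 0 ≤ τ) (hr : 0 < r)
    (hobs : ∀ x, ‖T τ x‖ ≤ K * ∫ t in Set.Ioc 0 τ, ‖B.adjoint (T t x)‖)
    (hη : ∀ x, Jeps T B r ψ τ η ≤ Jeps T B r ψ τ x) :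
    IsTykhonovWellPosed (Jeps T B r ψ τ) η := by
  rw [Jeps_eq_seminormFunctional hT] at hη ⊢
  refine isTykhonovWellPosed_seminormFunctional (K := ‖ψ‖ * K)
    (continuous_observationSeminorm _ (fun _ => hT.norm_comp_le _) hτ) hr (fun x => ?_) hη
  rw [observationSeminorm_apply _ hτ, intervalIntegral.integral_of_le hτ, mul_assoc]
  calc |⟪ψ, T τ x⟫| ≤ ‖ψ‖ * ‖T τ x‖ := abs_real_inner_le_norm _ _
    _ ≤ ‖ψ‖ * (K * ∫ t in Set.Ioc 0 τ, ‖B.adjoint (T t x)‖) := by gcongr; exact hobs x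

end SingleSemigroup

section Convergence

variable {α : Type*} {l : Filter α} {T : α → ℝ → X →L[ℝ] X} {R : α → X →L[ℝ] X}
  {T₀ : ℝ → X →L[ℝ] X} {R₀ : X →L[ℝ] X} {τ : α → ℝ} {τ₀ : ℝ}

lemma tendstoUniformlyOn_Jeps (hT₀ : IsPosContractionSemigroup T₀ R₀)
    (hT : ∀ i, IsPosContractionSemigroup (T i) (R i)) (hR : Tendsto R l (𝓝 R₀))
    (hτ₀ : 0 < τ₀) (hτ : Tendsto τ l (𝓝 τ₀)) (B : U →L[ℝ] X) (r : ℝ) (ψ : X) {s : Set X}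
    (hs : Bornology.IsBounded s) :
    TendstoUniformlyOn (fun i => Jeps (T i) B r ψ (τ i)) (Jeps T₀ B r ψ τ₀) l s := by
  rw [Jeps_eq_seminormFunctional hT₀,
    funext fun i => Jeps_eq_seminormFunctional (hT i) B r ψ (τ i)]
  have hcomp : ∀ a, 0 < a → TendstoUniformlyOn (fun i t => B.adjoint.comp (T i t))
      (fun t => B.adjoint.comp (T₀ t)) l (Set.Icc a τ₀) := fun a ha =>
    (ContinuousLinearMap.compL ℝ X X U B.adjoint).uniformContinuous.comp_tendstoUniformlyOn
      (hT₀.tendstoUniformlyOn_Icc hT hR ha)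
  have hobservation := tendstoUniformlyOn_observationSeminorm
    (fun i => (hT i).continuous_comp_apply B.adjoint) (hT₀.continuous_comp_apply B.adjoint)
    (fun i _ => (hT i).norm_comp_le _) (fun _ => hT₀.norm_comp_le _) hτ₀ hτ hcomp hs
  exact tendstoUniformlyOn_seminormFunctional hs
    (continuous_observationSeminorm _ (fun _ => hT₀.norm_comp_le _) hτ₀.le) hobservation
    (hT₀.tendsto_innerSL_comp hT hR hτ₀ hτ ψ)

theorem tendsto_minimizers_Jeps (hT₀ : IsPosContractionSemigroup T₀ R₀)
    (hT : ∀ i, IsPosContractionSemigroup (T i) (R i)) (hR : Tendsto R l (𝓝 R₀))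
    (hτ₀ : 0 < τ₀) (hτ : Tendsto τ l (𝓝 τ₀)) {B : U →L[ℝ] X} {r K : ℝ} (hr : 0 < r)
    (hobs : ∀ x, ‖T₀ τ₀ x‖ ≤ K * ∫ t in Set.Ioc 0 τ₀, ‖B.adjoint (T₀ t x)‖)
    {ψ : X} {η : α → X} {η₀ : X}
    (hη : ∀ i x, Jeps (T i) B r ψ (τ i) (η i) ≤ Jeps (T i) B r ψ (τ i) x)
    (hη₀ : ∀ x, Jeps T₀ B r ψ τ₀ η₀ ≤ Jeps T₀ B r ψ τ₀ x) :
    Tendsto η l (𝓝 η₀) ∧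
      Tendsto (fun i => Jeps (T i) B r ψ (τ i) (η i)) l (𝓝 (Jeps T₀ B r ψ τ₀ η₀)) :=
  (isTykhonovWellPosed_Jeps hT₀ hτ₀.le hr hobs hη₀).tendsto_minimizers
    (fun i => convexOn_Jeps (hT i) B hr.le ψ (τ i))
    (tendstoUniformlyOn_Jeps hT₀ hT hR hτ₀ hτ B r ψ Metric.isBounded_closedBall) hη

end Convergence

end MinimizerConvergence

section ParameterFamily

variable {X X₁ U : Type*} [NormedAddCommGroup X] [InnerProductSpace ℝ X]
  [NormedAddCommGroup X₁] [NormedSpace ℝ X₁]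
  [NormedAddCommGroup U] [InnerProductSpace ℝ U] [CompleteSpace U]

lemma isPosContractionSemigroup_of_generator {ι A : X₁ →L[ℝ] X} {G : X →L[ℝ] X₁}
    {T : ℝ → X →L[ℝ] X} (hAG : ∀ x, A (G x) = x) (hι : Function.Injective ι)
    (hG : (ι.comp G).IsPositive) (hT0 : T 0 = 1)
    (hTadd : ∀ s t, 0 ≤ s → 0 ≤ t → T (s + t) = (T s).comp (T t))
    (hTcont : ∀ x, Continuous fun t => T t x) (hTcontr : ∀ t, 0 ≤ t → ‖T t‖ ≤ 1)
    (hgen : ∀ φ t, 0 ≤ t → HasDerivAt (fun s => T s (ι φ)) (-(T t (A φ))) t) :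
    IsPosContractionSemigroup T (ι.comp G) where
  map_zero := hT0
  map_add := hTadd
  continuous_apply := hTcont
  norm_le_one := hTcontr
  hasDerivAt x t ht := by simpa only [hAG, ContinuousLinearMap.comp_apply] using hgen (G x) t ht
  isPositive := hG
  injective := hι.comp (Function.LeftInverse.injective hAG)

lemma injective_of_inner_pos {ι A : X₁ →L[ℝ] X} (hpos : ∀ φ, φ ≠ 0 → 0 < ⟪A φ, ι φ⟫) :
    Function.Injective ι :=
  (injective_iff_map_eq_zero ι).2 fun φ hφ => by
    by_contra hne
    simpa [hφ] using hpos φ hne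

lemma tendsto_minimizers_Jeps_nhdsGT [CompleteSpace X] {T : ℝ → ℝ → X →L[ℝ] X}
    {R : ℝ → X →L[ℝ] X} (hT : ∀ ε, 0 ≤ ε → IsPosContractionSemigroup (T ε) (R ε))
    (hR : Tendsto R (𝓝[>] 0) (𝓝 (R 0))) {B : U →L[ℝ] X}
    (hobs : ∀ τ, 0 < τ → ∃ K, ∀ x, ‖T 0 τ x‖ ≤ K * ∫ t in Set.Ioc 0 τ, ‖B.adjoint (T 0 t x)‖)
    {τ : ℝ → ℝ} (hτ₀ : 0 < τ 0) (hτ : Tendsto τ (𝓝[>] 0) (𝓝 (τ 0))) {r : ℝ} (hr : 0 < r)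
    {ψ : X} {η : ℝ → X}
    (hη : ∀ ε, 0 ≤ ε → ∀ x, Jeps (T ε) B r ψ (τ ε) (η ε) ≤ Jeps (T ε) B r ψ (τ ε) x) :
    Tendsto η (𝓝[>] 0) (𝓝 (η 0)) ∧
      Tendsto (fun ε => Jeps (T ε) B r ψ (τ ε) (η ε)) (𝓝[>] 0)
        (𝓝 (Jeps (T 0) B r ψ (τ 0) (η 0))) := by
  obtain ⟨K, hK⟩ := hobs (τ 0) hτ₀
  have hrange : Set.range ((↑) : Set.Ioi (0 : ℝ) → ℝ) ∈ 𝓝[>] 0 := by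
    simpa only [Subtype.range_coe] using self_mem_nhdsWithin
  rw [← tendsto_comap'_iff hrange, ← tendsto_comap'_iff hrange]
  exact tendsto_minimizers_Jeps (hT 0 le_rfl) (fun ε : Set.Ioi (0 : ℝ) => hT ε ε.2.le)
    (hR.comp tendsto_comap) hτ₀ (hτ.comp tendsto_comap) hr hK (fun ε => hη ε ε.2.le) (hη 0 le_rfl)

end ParameterFamily

lemma tendsto_of_tendsto_neg_half_mul_sq {α : Type*} {l : Filter α} {f : α → ℝ} {c : ℝ}
    (hf : ∀ᶠ i in l, 0 ≤ f i) (hc : 0 ≤ c)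
    (hsq : Tendsto (fun i => -(1 / 2) * f i ^ 2) l (𝓝 (-(1 / 2) * c ^ 2))) :
    Tendsto f l (𝓝 c) := by
  have hsqrt (x : ℝ) (hx : 0 ≤ x) : √(-2 * (-(1 / 2) * x ^ 2)) = x := by
    rw [show -2 * (-(1 / 2) * x ^ 2) = x ^ 2 by ring, Real.sqrt_sq hx]
  rw [← hsqrt c hc]
  exact (hsq.const_mul (-2)).sqrt.congr' (hf.mono fun i hi => hsqrt (f i) hi)

theorem stmt19_general {X X₁ U : Type*}
    [NormedAddCommGroup X] [InnerProductSpace ℝ X] [CompleteSpace X]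
    [NormedAddCommGroup X₁] [NormedSpace ℝ X₁]
    [NormedAddCommGroup U] [InnerProductSpace ℝ U] [CompleteSpace U]
    (ι : X₁ →L[ℝ] X) (hι_cpt : IsCompactOperator ι)
    (A : ℝ → X₁ →L[ℝ] X)
    (hsa : ∀ ε : ℝ, 0 ≤ ε → ∀ ψ φ : X₁, ⟪A ε ψ, ι φ⟫ = ⟪ι ψ, A ε φ⟫)
    (m₀ : ℝ) (hm₀ : 0 < m₀)
    (hpos : ∀ ψ : X₁, ψ ≠ 0 → 0 < ⟪A 0 ψ, ι ψ⟫)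
    (hcomp : ∀ ε : ℝ, 0 ≤ ε → ∀ ψ : X₁, m₀ * ⟪A 0 ψ, ι ψ⟫ ≤ ⟪A ε ψ, ι ψ⟫)
    (Ainv : ℝ → X →L[ℝ] X₁)
    (hAinv : ∀ ε : ℝ, 0 ≤ ε → (∀ x : X, A ε (Ainv ε x) = x) ∧ ∀ ψ : X₁, Ainv ε (A ε ψ) = ψ)
    (hres : ∀ x : X, Tendsto (fun ε => ι (Ainv ε x)) (𝓝[>] 0) (𝓝 (ι (Ainv 0 x))))
    (T : ℝ → ℝ → X →L[ℝ] X)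
    (hT0 : ∀ ε : ℝ, 0 ≤ ε → T ε 0 = 1)
    (hTadd : ∀ ε : ℝ, 0 ≤ ε → ∀ s t : ℝ, 0 ≤ s → 0 ≤ t → T ε (s + t) = (T ε s).comp (T ε t))
    (hTcont : ∀ ε : ℝ, 0 ≤ ε → ∀ x : X, Continuous fun t => T ε t x)
    (hTcontr : ∀ ε : ℝ, 0 ≤ ε → ∀ t : ℝ, 0 ≤ t → ‖T ε t‖ ≤ 1)
    (hgen : ∀ ε : ℝ, 0 ≤ ε → ∀ ψ : X₁, ∀ t : ℝ, 0 ≤ t →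
      HasDerivAt (fun s => T ε s (ι ψ)) (-(T ε t (A ε ψ))) t)
    (B : U →L[ℝ] X)
    (hobs : ∀ τ : ℝ, 0 < τ → ∃ K : ℝ, ∀ x : X,
      ‖T 0 τ x‖ ≤ K * ∫ t in Set.Ioc 0 τ, ‖B.adjoint (T 0 t x)‖)
    (r : ℝ) (hr : 0 < r) (ψ : X)
    (τf : ℝ → ℝ) (hτpos : 0 < τf 0) (hτ : Tendsto τf (𝓝[>] 0) (𝓝 (τf 0)))
    (ηh : ℝ → X)
    (hηh : ∀ ε : ℝ, 0 ≤ ε → ∀ ξ : X,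
      Jeps (T ε) B r ψ (τf ε) (ηh ε) ≤ Jeps (T ε) B r ψ (τf ε) ξ)
    (τ : ℝ) (hτ0 : 0 < τ) (ζ : ℝ → X)
    (hζ : ∀ ε : ℝ, 0 ≤ ε → ∀ ξ : X, Jeps (T ε) B r ψ τ (ζ ε) ≤ Jeps (T ε) B r ψ τ ξ)
    (Nstar : ℝ → ℝ)
    (hNstar : ∀ ε : ℝ, 0 ≤ ε → 0 ≤ Nstar ε ∧
      Jeps (T ε) B r ψ τ (ζ ε) = -(1 / 2) * (Nstar ε) ^ 2) :
    Tendsto ηh (𝓝[>] 0) (𝓝 (ηh 0)) ∧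
    Tendsto (fun ε => Jeps (T ε) B r ψ τ (ζ ε)) (𝓝[>] 0) (𝓝 (Jeps (T 0) B r ψ τ (ζ 0))) ∧
    Tendsto Nstar (𝓝[>] 0) (𝓝 (Nstar 0)) := by
  have hε : ∀ᶠ ε : ℝ in 𝓝[>] 0, 0 ≤ ε :=
    eventually_mem_nhdsWithin.mono fun _ => le_of_lt ∘ Set.mem_Ioi.1
  have hform₀ : ∀ φ, 0 ≤ ⟪A 0 φ, ι φ⟫ := fun φ => by
    rcases eq_or_ne φ 0 with rfl | hφ
    exacts [by simp, (hpos φ hφ).le]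
  have hGpos : ∀ ε, 0 ≤ ε → (ι.comp (Ainv ε)).IsPositive := fun ε hε =>
    isPositive_comp_inverse (hAinv ε hε).1 (hsa ε hε) fun φ =>
      (mul_nonneg hm₀.le (hform₀ φ)).trans (hcomp ε hε φ)
  have hsemigroup : ∀ ε, 0 ≤ ε → IsPosContractionSemigroup (T ε) (ι.comp (Ainv ε)) := fun ε hε =>
    isPosContractionSemigroup_of_generator (hAinv ε hε).1 (injective_of_inner_pos hpos)
      (hGpos ε hε) (hT0 ε hε) (hTadd ε hε) (hTcont ε hε) (hTcontr ε hε) (hgen ε hε)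
  have hresolvent : Tendsto (fun ε => ι.comp (Ainv ε)) (𝓝[>] 0) (𝓝 (ι.comp (Ainv 0))) :=
    tendsto_of_isCompactOperator_of_le_smul (hι_cpt.comp_clm _) (hε.mono hGpos)
      (hε.mono fun ε hε => comp_inverse_le_smul_comp_inverse hm₀ (hAinv 0 le_rfl).2
        (hAinv ε hε).1 (hGpos 0 le_rfl) (hGpos ε hε) (hcomp ε hε)) hres
  have hvalues := (tendsto_minimizers_Jeps_nhdsGT hsemigroup hresolvent hobs (τ := fun _ => τ) hτ0
    tendsto_const_nhds hr hζ).2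
  refine ⟨(tendsto_minimizers_Jeps_nhdsGT hsemigroup hresolvent hobs hτpos hτ hr hηh).1, hvalues,
    tendsto_of_tendsto_neg_half_mul_sq (hε.mono fun ε hε => (hNstar ε hε).1)
      (hNstar 0 le_rfl).1 ?_⟩
  rw [← (hNstar 0 le_rfl).2]
  exact hvalues.congr' (hε.mono fun ε hε => (hNstar ε hε).2)

/-- (Convergence of minimizers.) Under assumptions (C1)-(C4), if
`τ_ε → τ_0 > 0` and `η̂_ε` minimizes `J_ε^{τ_ε}`, then `η̂_ε → η̂_0` strongly in `X`;
consequently, for each `τ ∈ (0,τ̂)`, the optimal values `V*_ε(τ)` and the minimal norms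
`N*_ε(τ)` (related by `V*_ε(τ) = -(1/2) N*_ε(τ)²`) converge to `V*_0(τ)` and `N*_0(τ)`. -/
theorem stmt19 {X X₁ U : Type*}
    [NormedAddCommGroup X] [InnerProductSpace ℝ X] [CompleteSpace X]
    [NormedAddCommGroup X₁] [NormedSpace ℝ X₁]
    [NormedAddCommGroup U] [InnerProductSpace ℝ U] [CompleteSpace U]
    -- (C1): common domain `X₁` compactly embedded in `X`, each `A_ε` self-adjoint
    (ι : X₁ →L[ℝ] X) (hι_inj : Function.Injective ι) (hι_cpt : IsCompactOperator ι)
    (A : ℝ → X₁ →L[ℝ] X)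
    (hsa : ∀ ε : ℝ, 0 ≤ ε → ∀ ψ φ : X₁, ⟪A ε ψ, ι φ⟫ = ⟪ι ψ, A ε φ⟫)
    -- (C2): `A₀` strictly positive and `m₀⟨A₀ψ,ψ⟩ ≤ ⟨A_εψ,ψ⟩ ≤ m₁⟨A₀ψ,ψ⟩`
    (m₀ m₁ : ℝ) (hm₀ : 0 < m₀) (hm₁ : 0 < m₁)
    (hpos : ∀ ψ : X₁, ψ ≠ 0 → 0 < ⟪A 0 ψ, ι ψ⟫)
    (hcomp : ∀ ε : ℝ, 0 ≤ ε → ∀ ψ : X₁,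
      m₀ * ⟪A 0 ψ, ι ψ⟫ ≤ ⟪A ε ψ, ι ψ⟫ ∧ ⟪A ε ψ, ι ψ⟫ ≤ m₁ * ⟪A 0 ψ, ι ψ⟫)
    -- (C3): strong convergence of the resolvents `A_ε⁻¹ψ → A₀⁻¹ψ`
    (Ainv : ℝ → X →L[ℝ] X₁)
    (hAinv : ∀ ε : ℝ, 0 ≤ ε → (∀ x : X, A ε (Ainv ε x) = x) ∧ ∀ ψ : X₁, Ainv ε (A ε ψ) = ψ)
    (hres : ∀ x : X, Tendsto (fun ε => ι (Ainv ε x)) (nhdsWithin 0 (Set.Ioi 0))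
      (nhds (ι (Ainv 0 x))))
    -- `T^ε` is the contraction semigroup generated by `-A_ε`
    (T : ℝ → ℝ → X →L[ℝ] X)
    (hT0 : ∀ ε : ℝ, 0 ≤ ε → T ε 0 = 1)
    (hTadd : ∀ ε : ℝ, 0 ≤ ε → ∀ s t : ℝ, 0 ≤ s → 0 ≤ t → T ε (s + t) = (T ε s).comp (T ε t))
    (hTcont : ∀ ε : ℝ, 0 ≤ ε → ∀ x : X, Continuous fun t => T ε t x)
    (hTcontr : ∀ ε : ℝ, 0 ≤ ε → ∀ t : ℝ, 0 ≤ t → ‖T ε t‖ ≤ 1)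
    (hgen : ∀ ε : ℝ, 0 ≤ ε → ∀ ψ : X₁, ∀ t : ℝ, 0 ≤ t →
      HasDerivAt (fun s => T ε s (ι ψ)) (-(T ε t (A ε ψ))) t)
    -- (C4): the `L¹` observability inequality, uniform family version
    (B : U →L[ℝ] X) (K : ℝ → ℝ → ℝ)
    (hK_pos : ∀ ε : ℝ, 0 ≤ ε → ∀ τ : ℝ, 0 < τ → 0 < K ε τ)
    (hK_cont : ∀ ε : ℝ, 0 ≤ ε → ContinuousOn (K ε) (Set.Ioi 0))
    (hobs : ∀ ε : ℝ, 0 ≤ ε → ∀ τ : ℝ, 0 < τ → ∀ x : X,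
      ‖T ε τ x‖ ≤ K ε τ * ∫ t in Set.Ioc 0 τ, ‖B.adjoint (T ε t x)‖)
    (r : ℝ) (hr : 0 < r) (ψ : X)
    -- `τ_ε → τ_0 > 0`
    (τf : ℝ → ℝ) (hτpos : ∀ ε : ℝ, 0 ≤ ε → 0 < τf ε)
    (hτ : Tendsto τf (nhdsWithin 0 (Set.Ioi 0)) (nhds (τf 0)))
    -- `η̂_ε` is the minimizer of `J_ε^{τ_ε}`
    (ηh : ℝ → X)
    (hηh : ∀ ε : ℝ, 0 ≤ ε → ∀ ξ : X,
      Jeps (T ε) B r ψ (τf ε) (ηh ε) ≤ Jeps (T ε) B r ψ (τf ε) ξ)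
    -- a fixed time `τ ∈ (0,τ̂)`
    (τ : ℝ) (hτ0 : 0 < τ) (hτhat : ∀ s ∈ Set.Ioc (0:ℝ) τ, r < ‖T 0 s ψ‖)
    -- `ζ_ε` is the minimizer of `J_ε^τ`, `V*_ε(τ) = J_ε^τ(ζ_ε)` and `N*_ε(τ) ≥ 0` satisfies
    -- `V*_ε(τ) = -(1/2) N*_ε(τ)²`
    (ζ : ℝ → X)
    (hζ : ∀ ε : ℝ, 0 ≤ ε → ∀ ξ : X, Jeps (T ε) B r ψ τ (ζ ε) ≤ Jeps (T ε) B r ψ τ ξ)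
    (Nstar : ℝ → ℝ)
    (hNstar : ∀ ε : ℝ, 0 ≤ ε → 0 ≤ Nstar ε ∧
      Jeps (T ε) B r ψ τ (ζ ε) = -(1 / 2) * (Nstar ε) ^ 2) :
    -- strong convergence of the minimizers
    Tendsto ηh (nhdsWithin 0 (Set.Ioi 0)) (nhds (ηh 0)) ∧
    -- convergence of the optimal values `V*_ε(τ) → V*_0(τ)`
    Tendsto (fun ε => Jeps (T ε) B r ψ τ (ζ ε)) (nhdsWithin 0 (Set.Ioi 0))
      (nhds (Jeps (T 0) B r ψ τ (ζ 0))) ∧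
    -- convergence of the minimal norms `N*_ε(τ) → N*_0(τ)`
    Tendsto Nstar (nhdsWithin 0 (Set.Ioi 0)) (nhds (Nstar 0)) := by
  exact stmt19_general ι hι_cpt A hsa m₀ hm₀ hpos (fun ε hε φ => (hcomp ε hε φ).1) Ainv hAinv hres
    T hT0 hTadd hTcont hTcontr hgen B (fun τ hτ => ⟨K 0 τ, hobs 0 le_rfl τ hτ⟩) r hr ψ τf
    (hτpos 0 le_rfl) hτ ηh hηh τ hτ0 ζ hζ Nstar hNstar
end
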